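/- arXiv:2205.09686 — 2 statements merged into one kernel-verified Lean document; each statement's English description precedes it below -/
import Mathlib

section
/- For every integer n ≥ 7, the number of Dyck paths D ∈ D̂_n with x_1(D) = y_2(D) + 1 ≥ 2 equals Σ_{i=0}^{n-7} (i+1)·M_i·M_{n-7-i}. -/
/-- A Dyck path of semilength `n`, encoded as a word on `Bool`
(`true` = up step `u`, `false` = down step `d`). -/
def IsDyckWord (n : ℕ) (w : List Bool) : Prop :=
  w.length = 2 * n ∧ w.count true = n ∧ w.count false = n ∧
    ∀ p : List Bool, p <+: w → p.count false ≤ p.count true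

/-- The (0-based) indices of the up steps of `w`. -/
def upIdxs (w : List Bool) : List ℕ := w.findIdxs (· == true)

/-- The (0-based) indices of the down steps of `w`. -/
def downIdxs (w : List Bool) : List ℕ := w.findIdxs (· == false)

/-- `rStat w i` is the number of `d`'s strictly between the `i`-th and the
`(i+1)`-st `u` of `w` (with `i` 1-indexed). -/
def rStat (w : List Bool) (i : ℕ) : ℕ :=
  ((w.take ((upIdxs w).getD i 0)).drop ((upIdxs w).getD (i - 1) 0 + 1)).count false

/-- `sStat w i` is the number of `u`'s strictly between the `i`-th and the
`(i+1)`-st `d` of `w` (with `i` 1-indexed). -/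
def sStat (w : List Bool) (i : ℕ) : ℕ :=
  ((w.take ((downIdxs w).getD i 0)).drop ((downIdxs w).getD (i - 1) 0 + 1)).count true

/-- The statistic `L(D) = ∏_{i=1}^{n-1} C(r_i + s_i, r_i)` of a Dyck path of semilength `n`. -/
def LStat (n : ℕ) (w : List Bool) : ℕ :=
  ∏ i ∈ Finset.Icc 1 (n - 1), Nat.choose (rStat w i + sStat w i) (rStat w i)

/-- `dyckL n k` = the set `𝒟ₙᵏ` of Dyck paths of semilength `n` with `L(D) = k`. -/
def dyckL (n k : ℕ) : Set (List Bool) := {w | IsDyckWord n w ∧ LStat n w = k}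

/-- A Motzkin path, encoded as a word on `Option Bool`
(`some true` = up, `some false` = down, `none` = horizontal). -/
def IsMotzkinWord (w : List (Option Bool)) : Prop :=
  w.count (some false) = w.count (some true) ∧
    ∀ p : List (Option Bool), p <+: w → p.count (some false) ≤ p.count (some true)

/-- `motzkin n` = the `n`-th Motzkin number `Mₙ`, the number of Motzkin paths of length `n`. -/
noncomputable def motzkin (n : ℕ) : ℕ :=
  {w : List (Option Bool) | w.length = n ∧ IsMotzkinWord w}.ncard

/-- The Motzkin ballot number `T_{n,k}`: the number of Motzkin paths of length `n`
whose first down step is in position `k` (1-indexed); by convention `T_{k-1,k} = 1`,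
counting the path of `k-1` horizontal steps. -/
noncomputable def motzkinBallot (n k : ℕ) : ℕ :=
  if n + 1 = k then 1
  else
    {w : List (Option Bool) | w.length = n ∧ IsMotzkinWord w ∧
      w.getD (k - 1) none = some false ∧ ∀ j < k - 1, w.getD j none ≠ some false}.ncard

/-- Motzkin numbers with integer index: `Mᵢ = 0` for `i < 0`. -/
noncomputable def motzkinZ (i : ℤ) : ℤ := if 0 ≤ i then (motzkin i.toNat : ℤ) else 0

/-- Motzkin ballot numbers with integer first index: `T_{n,k} = 0` for `n < 0`. -/
noncomputable def motzkinBallotZ (n : ℤ) (k : ℕ) : ℤ :=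
  if 0 ≤ n then (motzkinBallot n.toNat k : ℤ) else 0

/-- The set of returns of a Dyck path `w` of semilength `n`:
indices `1 ≤ k ≤ n` such that the path touches the `x`-axis after `2k` steps. -/
def returns (n : ℕ) (w : List Bool) : Finset ℕ :=
  (Finset.Icc 1 n).filter fun k => (w.take (2 * k)).count false = (w.take (2 * k)).count true

/-- `dyckRS n r s` = the set `𝒟ₙ^{r,s}` of Dyck paths of semilength `n` having exactly one
index `i` with `rᵢ > 0` and `sᵢ > 0`, and such that at that index `rᵢ = r` and `sᵢ = s`. -/
def dyckRS (n r s : ℕ) : Set (List Bool) :=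
  {w | IsDyckWord n w ∧ ∃ i ∈ Finset.Icc 1 (n - 1),
    (0 < rStat w i ∧ 0 < sStat w i) ∧ rStat w i = r ∧ sStat w i = s ∧
      ∀ j ∈ Finset.Icc 1 (n - 1), 0 < rStat w j ∧ 0 < sStat w j → j = i}

/-- `twoStars n w k₁ k₂` says that `k₁ < k₂` are exactly the two indices `i` of `w`
with `rᵢ > 0` and `sᵢ > 0`. -/
def twoStars (n : ℕ) (w : List Bool) (k₁ k₂ : ℕ) : Prop :=
  k₁ ∈ Finset.Icc 1 (n - 1) ∧ k₂ ∈ Finset.Icc 1 (n - 1) ∧ k₁ < k₂ ∧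
    (0 < rStat w k₁ ∧ 0 < sStat w k₁) ∧ (0 < rStat w k₂ ∧ 0 < sStat w k₂) ∧
    ∀ j ∈ Finset.Icc 1 (n - 1), 0 < rStat w j ∧ 0 < sStat w j → j = k₁ ∨ j = k₂

/-- `xStat w k` = the number of indices `i < k` with `rᵢ = 0` and `sᵢ > 0`. -/
def xStat (w : List Bool) (k : ℕ) : ℕ :=
  ((Finset.Ico 1 k).filter fun i => rStat w i = 0 ∧ 0 < sStat w i).card

/-- `yStat w k` = the number of indices `i < k` with `rᵢ > 0` and `sᵢ = 0`. -/
def yStat (w : List Bool) (k : ℕ) : ℕ :=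
  ((Finset.Ico 1 k).filter fun i => 0 < rStat w i ∧ sStat w i = 0).card

/-- The generating function `m(x) = Σ Mₙ xⁿ` of the Motzkin numbers, over `ℚ`. -/
noncomputable def motzkinGF : PowerSeries ℚ := PowerSeries.mk fun n => (motzkin n : ℚ)

/-!
Record, for each letter of a Dyck path, whether it ends a run of equal letters: the `u`'s and the
`d`'s give the two components of a word `l` of length `n - 1` which is a two-coloured Motzkin path,
and `rᵢ > 0` (resp. `sᵢ > 0`) iff the first (resp. second) component of the `i`-th letter is `true`.
So the distinguished indices are the occurrences of `(true, true)`, and the value of `rᵢ` there is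
the length of a run of `false` in the second component, determined by how many `true`s the first
component has before `i` (and symmetrically for `sᵢ`).

If `x₁ = y₂ + 1`, the blocks of `l` before, between and after the two distinguished letters can be
chosen almost independently: the middle block `β` is arbitrary, while `L = 4` says that the first
block, and the last one read backwards, consist of an up step preceded by a *tight* prefix of a
Motzkin path, whose final height is the number of down (resp. up) steps of `β`. Deleting the up step
following the `y`-th one, `y` being the number of down steps, turns the tight prefixes of height
`z + 1` into arbitrary Motzkin prefixes of height `z`. Hence tight prefixes of height `z` have
generating function `S ^ z`, where `S = X * M`. The sum over all `β` having a down step is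
`(1 - X * (1 + 2 * S))⁻¹ - (1 - X * (1 + S))⁻¹ = X ^ 2 * S' * M`, in which the coefficients of `S'`
are `(i + 1) * Mᵢ`.
-/

section StaysNonneg

variable {α β : Type*} {up down : α → Bool} {h : ℤ} {a : α} {l l' : List α}

/-- A lattice path starting at height `h`, whose steps `a` go up if `up a`, down if `down a` (and
are horizontal if both hold or neither does), never goes below the axis. Dyck paths, Motzkin paths
and two-coloured Motzkin paths are the instances used here. -/
def StaysNonneg (up down : α → Bool) (h : ℤ) (l : List α) : Prop :=
  ∀ p, p <+: l → (p.countP down : ℤ) ≤ h + p.countP up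

lemma staysNonneg_nil : StaysNonneg up down h [] ↔ 0 ≤ h := by
  simp [StaysNonneg]

lemma staysNonneg_cons :
    StaysNonneg up down h (a :: l) ↔
      0 ≤ h ∧ StaysNonneg up down (h + (up a).toNat - (down a).toNat) l := by
  simp only [StaysNonneg, List.prefix_cons_iff]
  constructor
  · refine fun H => ⟨by simpa using H [] (.inl rfl), fun p hp => ?_⟩
    have := H (a :: p) (.inr ⟨p, rfl, hp⟩)
    cases hu : up a <;> cases hd : down a <;> simp [hu, hd] at this ⊢ <;> lia
  · rintro ⟨h0, H⟩ p (rfl | ⟨t, rfl, ht⟩)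
    · simpa using h0
    · have := H t ht
      cases hu : up a <;> cases hd : down a <;> simp [hu, hd] at this ⊢ <;> lia

lemma StaysNonneg.nonneg (H : StaysNonneg up down h l) : 0 ≤ h := by
  simpa using H [] (List.nil_prefix)

lemma staysNonneg_append :
    StaysNonneg up down h (l ++ l') ↔
      StaysNonneg up down h l ∧ StaysNonneg up down (h + l.countP up - l.countP down) l' := by
  induction l generalizing h with
  | nil => simpa [staysNonneg_nil] using StaysNonneg.nonneg
  | cons a l ih =>
    have : h + (up a).toNat - (down a).toNat + l.countP up - l.countP down =
        h + (a :: l).countP up - (a :: l).countP down := by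
      cases hu : up a <;> cases hd : down a <;> simp [hu, hd] <;> ring
    rw [List.cons_append, staysNonneg_cons, staysNonneg_cons, ih, and_assoc, this]

lemma staysNonneg_map {f : β → α} {l : List β} :
    StaysNonneg up down h (l.map f) ↔ StaysNonneg (up ∘ f) (down ∘ f) h l := by
  induction l generalizing h with
  | nil => simp [staysNonneg_nil]
  | cons a l ih => simp [staysNonneg_cons, ih]

lemma StaysNonneg.final_nonneg (H : StaysNonneg up down h l) :
    0 ≤ h + l.countP up - l.countP down := by
  have := H l List.prefix_rfl
  lia

lemma staysNonneg_concat :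
    StaysNonneg up down h (l ++ [a]) ↔
      StaysNonneg up down h l ∧ 0 ≤ h + (l ++ [a]).countP up - (l ++ [a]).countP down := by
  refine ⟨fun H => ⟨(staysNonneg_append.1 H).1, H.final_nonneg⟩, fun ⟨H, _⟩ p hp => ?_⟩
  rcases List.prefix_concat_iff.1 hp with rfl | hp
  · lia
  · exact H p hp

lemma staysNonneg_reverse :
    StaysNonneg down up (h + l.countP up - l.countP down) l.reverse ↔ StaysNonneg up down h l := by
  induction l generalizing h with
  | nil => simp [staysNonneg_nil]
  | cons a l ih =>
    have : h + (a :: l).countP up - (a :: l).countP down =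
        h + (up a).toNat - (down a).toNat + l.countP up - l.countP down := by
      cases hu : up a <;> cases hd : down a <;> simp [hu, hd] <;> ring
    rw [List.reverse_cons, staysNonneg_append, this, ih, staysNonneg_cons, staysNonneg_cons,
      staysNonneg_nil, List.countP_reverse, List.countP_reverse]
    constructor
    · rintro ⟨h₁, -, h₂⟩
      exact ⟨by lia, h₁⟩
    · rintro ⟨h₁, h₂⟩
      have := h₂.nonneg
      exact ⟨h₂, by lia, by lia⟩

lemma StaysNonneg.of_countP_le (H : (l.countP down : ℤ) ≤ h) : StaysNonneg up down h l := by
  intro p hp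
  have := hp.sublist.countP_le (p := down)
  lia

end StaysNonneg

section FalsesAfter

/-- The number of entries `false` between the `p`-th and the `(p+1)`-st entry `true` of a list,
where the `0`-th entry `true` is placed just before the list; if there is no `(p+1)`-st one, all
entries after the `p`-th one are counted. -/
def falsesAfter : List Bool → ℕ → ℕ
  | [], _ => 0
  | true :: _, 0 => 0
  | true :: l, p + 1 => falsesAfter l p
  | false :: l, 0 => falsesAfter l 0 + 1
  | false :: l, p + 1 => falsesAfter l (p + 1)

lemma falsesAfter_cons_false (l : List Bool) (p : ℕ) :
    falsesAfter (false :: l) p = falsesAfter l p + if p = 0 then 1 else 0 := by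
  cases p <;> rfl

lemma falsesAfter_append_true_of_le {L M : List Bool} {p : ℕ} (h : p ≤ L.count true) :
    falsesAfter (L ++ true :: M) p = falsesAfter L p := by
  induction L generalizing p with
  | nil => simp_all [falsesAfter]
  | cons a L ih => cases a <;> cases p <;> simp_all [falsesAfter]

lemma falsesAfter_append_true_add (L M : List Bool) (j : ℕ) :
    falsesAfter (L ++ true :: M) (L.count true + 1 + j) = falsesAfter M j := by
  induction L with
  | nil => simp [falsesAfter, add_comm 1 j]
  | cons a L ih => cases a <;> simpa [falsesAfter, add_right_comm _ 1 j] using ih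

lemma falsesAfter_append_false (L : List Bool) (p : ℕ) :
    falsesAfter (L ++ [false]) p = falsesAfter L p + if p = L.count true then 1 else 0 := by
  induction L generalizing p with
  | nil => cases p <;> simp [falsesAfter]
  | cons a L ih => cases a <;> cases p <;> simp [falsesAfter, ih, Nat.add_right_comm]

lemma falsesAfter_reverse {L : List Bool} {p q : ℕ} (h : L.count true = p + q) :
    falsesAfter L.reverse q = falsesAfter L p := by
  induction L generalizing p with
  | nil => simp [falsesAfter]
  | cons a L ih =>
    cases a
    · rw [List.reverse_cons, falsesAfter_append_false, ih (by simpa using h)]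
      cases p <;> simp_all [falsesAfter]
    · rw [List.reverse_cons]
      cases p with
      | zero =>
        obtain rfl : q = L.reverse.count true + 1 + 0 := by simp at h ⊢; lia
        rw [falsesAfter_append_true_add]
        simp [falsesAfter]
      | succ p =>
        rw [falsesAfter_append_true_of_le (by simp at h ⊢; lia), falsesAfter]
        exact ih (by simp at h; lia)

lemma falsesAfter_zero_eq_zero_iff {L : List Bool} :
    falsesAfter L 0 = 0 ↔ L.head? ≠ some false := by
  rcases L with _ | ⟨_ | _, L⟩ <;> simp [falsesAfter]

lemma falsesAfter_count_eq_zero_iff {L : List Bool} :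
    falsesAfter L (L.count true) = 0 ↔ L.getLast? ≠ some false := by
  rw [← falsesAfter_reverse (q := 0) (p := L.count true) rfl, falsesAfter_zero_eq_zero_iff,
    List.head?_reverse]

end FalsesAfter

section Statistics

variable {α : Type*}

lemma findIdxs_getD_cons (q : α → Bool) {a : α} {l : List α} {i : ℕ}
    (h : i < (a :: l).countP q) :
    ((a :: l).findIdxs q).getD i 0 =
      if q a then (match i with | 0 => 0 | i + 1 => (l.findIdxs q).getD i 0 + 1)
      else (l.findIdxs q).getD i 0 + 1 := by
  rw [List.findIdxs_cons, List.findIdxs_start]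
  by_cases ha : q a
  · cases i with
    | zero => simp [ha]
    | succ i =>
      have : i < l.countP q := by simpa [ha] using h
      simp [ha, List.getD_eq_getElem?_getD, this]
  · have : i < l.countP q := by simpa [ha] using h
    simp [ha, List.getD_eq_getElem?_getD, this]

lemma countP_take_findIdxs (q : α → Bool) {l : List α} (h : 0 < l.countP q) :
    (l.take ((l.findIdxs q).getD 0 0)).countP (!q ·) = falsesAfter (l.map q) 0 := by
  induction l with
  | nil => simp at h
  | cons a l ih =>
    rw [findIdxs_getD_cons q h]
    cases ha : q a
    · simpa [ha, falsesAfter] using ih (by simpa [ha] using h)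
    · simp [ha, falsesAfter]

lemma countP_between_findIdxs (q : α → Bool) {l : List α} {i : ℕ} (h : i + 1 < l.countP q) :
    ((l.take ((l.findIdxs q).getD (i + 1) 0)).drop ((l.findIdxs q).getD i 0 + 1)).countP (!q ·) =
      falsesAfter (l.map q) (i + 1) := by
  induction l generalizing i with
  | nil => simp at h
  | cons a l ih =>
    rw [findIdxs_getD_cons q h, findIdxs_getD_cons q (Nat.lt_of_succ_lt h)]
    cases ha : q a
    · simpa [ha, falsesAfter] using ih (by simpa [ha] using h)
    · have h : i < l.countP q := by simpa [ha] using h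
      cases i with
      | zero => simpa [ha, falsesAfter] using countP_take_findIdxs q h
      | succ i => simpa [ha, falsesAfter] using ih h

lemma rStat_eq_falsesAfter {w : List Bool} {i : ℕ} (hi : i + 1 < w.count true) :
    rStat w (i + 1) = falsesAfter (w.map (· == true)) (i + 1) := by
  rw [← countP_between_findIdxs _ hi, rStat, List.count]
  congr 1
  ext a
  cases a <;> rfl

lemma sStat_eq_falsesAfter {w : List Bool} {i : ℕ} (hi : i + 1 < w.count false) :
    sStat w (i + 1) = falsesAfter (w.map (· == false)) (i + 1) := by
  rw [← countP_between_findIdxs _ hi, sStat, List.count]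
  congr 1
  ext a
  cases a <;> rfl

end Statistics

section RunEnds

/-- For every letter `b` of `w`, whether it ends a maximal run of letters `b`. -/
def runEnds (b : Bool) : List Bool → List Bool
  | [] => []
  | c :: w => if c = b then decide (w.head? ≠ some b) :: runEnds b w else runEnds b w

lemma length_runEnds (b : Bool) (w : List Bool) : (runEnds b w).length = w.count b := by
  induction w with
  | nil => rfl
  | cons c w ih => by_cases hc : c = b <;> simp [runEnds, hc, ih]

-- The `i`-th letter other than `b` is followed by a `b` iff it ends its run, and that run is then
-- followed by the run of `b`s whose number is the number of runs ended so far.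
lemma falsesAfter_eq_runEnds {b : Bool} {w : List Bool} {i : ℕ} (hi : i < w.count (!b)) :
    falsesAfter (w.map (· == !b)) i =
      if (decide (w.head? ≠ some (!b)) :: runEnds (!b) w).getD i false then
        falsesAfter (runEnds b w)
          (((decide (w.head? ≠ some (!b)) :: runEnds (!b) w).take i).count true) + 1
      else 0 := by
  induction w generalizing i with
  | nil => simp at hi
  | cons c w ih =>
    by_cases hc : c = b
    · subst hc
      rcases w with _ | ⟨a, w⟩
      · simp at hi
      · have hc : (c == !c) = false := by cases c <;> rfl
        rw [List.map_cons, hc, falsesAfter_cons_false, ih (by simpa using hi)]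
        cases i <;> cases a <;> cases c <;> simp [runEnds, falsesAfter]
    · obtain rfl : c = !b := Bool.eq_not_of_ne hc
      cases i with
      | zero => simp [falsesAfter]
      | succ i => simp [falsesAfter, runEnds, ih (by simpa using hi)]

/-- The word on `{u, d}` beginning with the letter `st` in which the `i`-th `u` ends a run of
`u`'s iff the `i`-th entry of `P` is `true`, and the `i`-th `d` ends a run of `d`'s iff the
`i`-th entry of `V` is `true`. -/
def weave : Bool → List Bool → List Bool → List Bool
  | true, p :: P, V => true :: weave (!p) P V
  | false, P, v :: V => false :: weave v P V
  | true, [], _ => []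
  | false, _, [] => []
termination_by _ P V => P.length + V.length

lemma weave_runEnds {st : Bool} {w : List Bool} (h : w.head? ≠ some (!st)) :
    weave st (runEnds true w) (runEnds false w) = w := by
  induction w generalizing st with
  | nil => cases st <;> simp [runEnds, weave]
  | cons c w ih =>
    obtain rfl : c = st := by simpa using h
    cases c
    · by_cases hw : w.head? = some false <;> simp [runEnds, weave, ih, hw]
    · by_cases hw : w.head? = some true <;> simp [runEnds, weave, ih, hw]

lemma head?_weave_ne (st : Bool) (P V : List Bool) : (weave st P V).head? ≠ some (!st) := by
  cases st <;> cases P <;> cases V <;> simp [weave]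

lemma runEnds_weave {st : Bool} {P V : List Bool} (hP : P.getLast? ≠ some false)
    (hV : V.getLast? ≠ some false) (h : V.count true = P.count true + if st then 0 else 1) :
    runEnds true (weave st P V) = P ∧ runEnds false (weave st P V) = V := by
  induction st, P, V using weave.induct with
  | case1 p P V ih =>
    obtain ⟨h1, h2⟩ := ih (by cases P <;> simp_all [List.getLast?_cons]) hV (by
      cases p <;> simp_all)
    have := head?_weave_ne (!p) P V
    cases p
    · obtain ⟨q, Q, rfl⟩ : ∃ q Q, P = q :: Q := by cases P <;> simp_all
      simp_all [weave, runEnds]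
    · simp_all [weave, runEnds]
  | case2 P v V ih =>
    obtain ⟨h1, h2⟩ := ih hP (by cases V <;> simp_all [List.getLast?_cons]) (by
      cases v <;> simp_all)
    have := head?_weave_ne v P V
    cases v
    · obtain ⟨q, Q, rfl⟩ : ∃ q Q, V = q :: Q := by cases V <;> simp_all
      simp_all [weave, runEnds]
    · simp_all [weave, runEnds]
  | case3 V =>
    rcases List.eq_nil_or_concat' V with rfl | ⟨L, a, rfl⟩
    · simp [weave, runEnds]
    · cases a <;> simp_all
  | case4 P => simp at h

lemma head?_ne_of_runEnds_eq_nil {b : Bool} {w : List Bool} (h : runEnds b w = []) :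
    w.head? ≠ some b := by
  rcases w with _ | ⟨a, w⟩
  · simp
  · rintro h2
    simp only [List.head?_cons, Option.some.injEq] at h2
    simp [runEnds, h2] at h

lemma getLast?_runEnds_ne (b : Bool) (w : List Bool) : (runEnds b w).getLast? ≠ some false := by
  induction w with
  | nil => simp [runEnds]
  | cons c w ih =>
    by_cases hc : c = b
    · rcases hr : runEnds b w with _ | ⟨a, l⟩
      · simp [runEnds, hr, hc, head?_ne_of_runEnds_eq_nil hr]
      · rw [hr] at ih
        simpa [runEnds, hr, hc, List.getLast?_cons] using ih
    · simpa [runEnds, hc] using ih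

lemma exists_runEnds_eq_append {b : Bool} {w : List Bool} {m : ℕ} (h : w.count b = m + 1) :
    ∃ l : List Bool, l.length = m ∧ runEnds b w = l ++ [true] := by
  have hl := getLast?_runEnds_ne b w
  have hn := length_runEnds b w
  rcases List.eq_nil_or_concat' (runEnds b w) with h0 | ⟨l, a, ha⟩
  · simp [h0, h] at hn
  · exact ⟨l, by simpa [ha, h] using hn, by cases a <;> simp_all⟩

lemma count_runEnds (w : List Bool) :
    (runEnds true w).count true + (if w.head? = some false then 1 else 0) =
      (runEnds false w).count true + (if w.getLast? = some true then 1 else 0) := by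
  induction w with
  | nil => simp [runEnds]
  | cons c w ih =>
    rcases w with _ | ⟨a, w⟩
    · cases c <;> simp [runEnds]
    · cases c <;> cases a <;> simp_all [runEnds, List.getLast?_cons]; lia

lemma staysNonneg_iff_runEnds {w : List Bool} (h : ℕ) (hw : w.getLast? ≠ some true) :
    StaysNonneg id not h w ↔
      ∀ k, ((runEnds true w).take k).count true + (if w.head? = some false then 1 else 0) ≤
        ((runEnds false w).take (k + h)).count true := by
  induction w generalizing h with
  | nil => simp [runEnds, staysNonneg_nil]
  | cons c w ih =>
    have ih := fun h => ih h (by cases w <;> simp_all [List.getLast?_cons])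
    rw [staysNonneg_cons, and_iff_right (by positivity)]
    cases c
    · cases h with
      | zero =>
        refine iff_of_false (fun H => by simpa using H.nonneg) fun H => by simpa using H 0
      | succ h =>
        have : ((h + 1 : ℕ) + (id false).toNat - (!false).toNat : ℤ) = h := by simp
        rw [this, ih]
        refine forall_congr' fun k => ?_
        by_cases hw : w.head? = some false <;> simp [runEnds, hw, ← add_assoc]
    · have : (h + (id true).toNat - (!true).toNat : ℤ) = (h + 1 : ℕ) := by simp
      rw [this, ih]
      obtain ⟨a, w, rfl⟩ : ∃ a v, w = a :: v := by cases w <;> simp_all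
      refine Iff.trans (forall_congr' fun k => ?_) (and_iff_right ?_).symm |>.trans
        Nat.and_forall_add_one
      · cases a <;> simp [runEnds, add_assoc, add_comm 1 h]
      · simp [runEnds]

end RunEnds

section TwoMotzkin

/-- The word on `{u, d}` in which the `i`-th `u` (resp. the `i`-th `d`) ends a run iff the first
(resp. second) component of the `i`-th letter of `l` is `true`. -/
def dyckOf (l : List (Bool × Bool)) : List Bool :=
  weave true (l.map Prod.fst ++ [true]) (l.map Prod.snd ++ [true])

/-- Two-coloured Motzkin words: `(false, true)` is an up step, `(true, false)` a down step, and
`(false, false)`, `(true, true)` are the two kinds of horizontal steps. -/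
def IsTwoMotzkin (l : List (Bool × Bool)) : Prop :=
  StaysNonneg Prod.snd Prod.fst 0 l ∧ l.countP Prod.fst = l.countP Prod.snd

lemma count_true_map {α : Type*} (f : α → Bool) (l : List α) :
    (l.map f).count true = l.countP f := by
  simp [List.count, List.countP_map, Function.comp_def]

lemma runEnds_dyckOf {l : List (Bool × Bool)} (h : l.countP Prod.fst = l.countP Prod.snd) :
    runEnds true (dyckOf l) = l.map Prod.fst ++ [true] ∧
      runEnds false (dyckOf l) = l.map Prod.snd ++ [true] := by
  apply runEnds_weave <;> simp [count_true_map, h]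

lemma head?_dyckOf (l : List (Bool × Bool)) : (dyckOf l).head? = some true := by
  cases l <;> simp [dyckOf, weave]

lemma countP_id_eq_count (w : List Bool) : w.countP id = w.count true := by
  simp [← count_true_map]

lemma countP_not_eq_count (w : List Bool) : w.countP not = w.count false := by
  simp [List.count]

lemma isDyckWord_iff {n : ℕ} {w : List Bool} :
    IsDyckWord n w ↔
      w.count true = n ∧ w.count false = n ∧ StaysNonneg id not 0 w := by
  have := List.count_true_add_count_false w
  simp only [IsDyckWord, StaysNonneg, zero_add, Nat.cast_le,
    countP_id_eq_count, countP_not_eq_count]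
  exact ⟨fun h => h.2, fun h => ⟨by lia, h⟩⟩

lemma count_dyckOf {l : List (Bool × Bool)} (h : l.countP Prod.fst = l.countP Prod.snd)
    (b : Bool) : (dyckOf l).count b = l.length + 1 := by
  obtain ⟨h1, h2⟩ := runEnds_dyckOf h
  cases b <;> simp [← length_runEnds, h1, h2]

lemma count_take_map_append_true {α : Type*} (f : α → Bool) (l : List α) (k : ℕ) :
    ((l.map f ++ [true]).take k).count true =
      (l.take k).countP f + if l.length < k then 1 else 0 := by
  rw [List.take_append, List.count_append, ← List.map_take, count_true_map, List.length_map]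
  rcases le_or_gt k l.length with h | h
  · simp [Nat.sub_eq_zero_of_le h, h.not_gt]
  · simp [List.take_of_length_le (l := [true]) (Nat.sub_pos_of_lt h), h]

lemma getElem?_map_append_of_lt {α β : Type*} (f : α → β) {l : List α} (l' : List β) {i : ℕ}
    (hi : i < l.length) : (l.map f ++ l')[i]? = some (f l[i]) := by
  simp [List.getElem?_append_left, hi]

lemma staysNonneg_dyckOf_iff {l : List (Bool × Bool)} (h : l.countP Prod.fst = l.countP Prod.snd) :
    StaysNonneg id not 0 (dyckOf l) ↔ StaysNonneg Prod.snd Prod.fst 0 l := by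
  obtain ⟨h1, h2⟩ := runEnds_dyckOf h
  have hlast : (dyckOf l).getLast? ≠ some true := by
    have := count_runEnds (dyckOf l)
    intro hl
    simp [h1, h2, hl, head?_dyckOf, count_true_map, h] at this
  rw [← Nat.cast_zero, staysNonneg_iff_runEnds 0 hlast, h1, h2, head?_dyckOf]
  simp only [count_take_map_append_true, add_zero, StaysNonneg]
  refine ⟨fun H p hp => ?_, fun H k => ?_⟩
  · have := H p.length
    rw [← List.prefix_iff_eq_take.1 hp] at this
    simp only [Option.some.injEq, Bool.true_eq_false, if_false] at this
    lia
  · have := H _ (List.take_prefix k l)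
    simp only [Option.some.injEq, Bool.true_eq_false, if_false]
    lia

lemma isDyckWord_dyckOf_iff {m : ℕ} {l : List (Bool × Bool)}
    (h : l.countP Prod.fst = l.countP Prod.snd) :
    IsDyckWord (m + 1) (dyckOf l) ↔ l.length = m ∧ IsTwoMotzkin l := by
  simp [isDyckWord_iff, count_dyckOf h, staysNonneg_dyckOf_iff h, IsTwoMotzkin, h]

lemma IsDyckWord.head?_ne {n : ℕ} {w : List Bool} (h : IsDyckWord n w) :
    w.head? ≠ some false := by
  rcases w with _ | ⟨a, w⟩
  · simp
  · have := h.2.2.2 [a] (by simp)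
    cases a <;> simp_all

lemma IsDyckWord.getLast?_ne {n : ℕ} {w : List Bool} (h : IsDyckWord n w) :
    w.getLast? ≠ some true := by
  obtain ⟨-, ht, hf, hw⟩ := h
  rcases List.eq_nil_or_concat' w with rfl | ⟨l, a, rfl⟩
  · simp
  · have := hw l (List.prefix_append _ _)
    cases a
    · simp
    · have ht : l.count true + 1 = n := by simpa using ht
      have hf : l.count false = n := by simpa using hf
      lia

lemma IsDyckWord.exists_dyckOf {m : ℕ} {w : List Bool} (h : IsDyckWord (m + 1) w) :
    ∃ l, l.length = m ∧ IsTwoMotzkin l ∧ dyckOf l = w := by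
  obtain ⟨P, hPl, hP⟩ := exists_runEnds_eq_append h.2.1
  obtain ⟨V, hVl, hV⟩ := exists_runEnds_eq_append h.2.2.1
  have hfst : (P.zip V).map Prod.fst = P := List.map_fst_zip (by lia)
  have hsnd : (P.zip V).map Prod.snd = V := List.map_snd_zip (by lia)
  have hbal : (P.zip V).countP Prod.fst = (P.zip V).countP Prod.snd := by
    have := count_runEnds w
    rw [← count_true_map, ← count_true_map, hfst, hsnd]
    simpa [hP, hV, h.head?_ne, h.getLast?_ne] using this
  have heq : dyckOf (P.zip V) = w := by
    rw [dyckOf, hfst, hsnd, ← hP, ← hV]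
    exact weave_runEnds h.head?_ne
  rw [← heq, isDyckWord_dyckOf_iff hbal] at h
  exact ⟨P.zip V, h.1, h.2, heq⟩

lemma injOn_dyckOf : Set.InjOn dyckOf {l | IsTwoMotzkin l} := by
  intro l hc l' hc' h
  obtain ⟨h1, h2⟩ := runEnds_dyckOf hc.2
  obtain ⟨h1', h2'⟩ := runEnds_dyckOf hc'.2
  rw [h, h1'] at h1
  rw [h, h2'] at h2
  rw [← List.zip_unzip l, ← List.zip_unzip l', List.unzip_eq_map, List.unzip_eq_map]
  simp only [List.append_cancel_right h1, List.append_cancel_right h2]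

end TwoMotzkin

section StatisticsOfDyckOf

variable {l : List (Bool × Bool)} {i k : ℕ}

lemma rStat_dyckOf (hc : IsTwoMotzkin l) (hi : i < l.length) :
    rStat (dyckOf l) (i + 1) =
      if l[i].1 then falsesAfter (l.map Prod.snd) ((l.take i).countP Prod.fst) + 1 else 0 := by
  obtain ⟨h1, h2⟩ := runEnds_dyckOf hc.2
  have hcount : i + 1 < (dyckOf l).count true := by rw [count_dyckOf hc.2]; lia
  have hle : (l.take i).countP Prod.fst ≤ (l.map Prod.snd).count true := by
    rw [count_true_map, ← hc.2]
    exact (List.take_sublist i l).countP_le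
  have := falsesAfter_eq_runEnds (b := false) hcount
  rw [rStat_eq_falsesAfter hcount]
  simpa [h1, h2, head?_dyckOf, count_take_map_append_true, getElem?_map_append_of_lt, hi, hi.not_gt,
    falsesAfter_append_true_of_le hle] using this

lemma sStat_dyckOf (hc : IsTwoMotzkin l) (hi : i < l.length) :
    sStat (dyckOf l) (i + 1) =
      if l[i].2 then falsesAfter (l.map Prod.fst) ((l.take i).countP Prod.snd + 1) + 1 else 0 := by
  obtain ⟨h1, h2⟩ := runEnds_dyckOf hc.2
  have hcount : i + 1 < (dyckOf l).count false := by rw [count_dyckOf hc.2]; lia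
  have := falsesAfter_eq_runEnds (b := true) hcount
  rw [sStat_eq_falsesAfter hcount, ← Bool.not_true, this]
  have hle (ha : l[i].2 = true) : (l.take i).countP Prod.snd + 1 ≤ (l.map Prod.fst).count true := by
    rw [count_true_map, hc.2]
    have hle := (List.take_sublist (i + 1) l).countP_le (p := Prod.snd)
    rw [List.take_add_one, List.countP_append] at hle
    simpa [hi, ha] using hle
  cases ha : l[i].2
  · simp [h2, head?_dyckOf, getElem?_map_append_of_lt, hi, ha]
  · simp [h1, h2, head?_dyckOf, count_take_map_append_true, getElem?_map_append_of_lt, hi,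
      hi.not_gt, ha, falsesAfter_append_true_of_le (hle ha)]

lemma rStat_dyckOf_pos (hc : IsTwoMotzkin l) (hi : i < l.length) :
    0 < rStat (dyckOf l) (i + 1) ↔ l[i].1 = true := by
  rw [rStat_dyckOf hc hi]
  split_ifs with ha <;> simp [ha]

lemma sStat_dyckOf_pos (hc : IsTwoMotzkin l) (hi : i < l.length) :
    0 < sStat (dyckOf l) (i + 1) ↔ l[i].2 = true := by
  rw [sStat_dyckOf hc hi]
  split_ifs with ha <;> simp [ha]

lemma card_filter_Ico_eq_countP_take {α : Type*} {l : List α} {q : ℕ → Prop} [DecidablePred q]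
    {f : α → Bool} (hq : ∀ i (hi : i < l.length), q (i + 1) ↔ f l[i] = true) (hk : k ≤ l.length) :
    ((Finset.Ico 1 (k + 1)).filter q).card = (l.take k).countP f := by
  induction k with
  | zero => simp
  | succ k ih =>
    rw [← Finset.insert_Ico_right_eq_Ico_add_one (by lia), Finset.filter_insert,
      List.take_add_one, List.getElem?_eq_getElem hk, List.countP_append, ← ih (by lia)]
    by_cases h : f l[k] <;> simp [hq k hk, h]

lemma xStat_dyckOf (hc : IsTwoMotzkin l) (hk : k ≤ l.length) :
    xStat (dyckOf l) (k + 1) = (l.take k).countP (fun a => !a.1 && a.2) := by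
  refine card_filter_Ico_eq_countP_take (fun i hi => ?_) hk
  rw [← Nat.le_zero, ← not_lt, rStat_dyckOf_pos hc hi, sStat_dyckOf_pos hc hi]
  cases l[i].1 <;> cases l[i].2 <;> simp

lemma yStat_dyckOf (hc : IsTwoMotzkin l) (hk : k ≤ l.length) :
    yStat (dyckOf l) (k + 1) = (l.take k).countP (fun a => a.1 && !a.2) := by
  refine card_filter_Ico_eq_countP_take (fun i hi => ?_) hk
  rw [← Nat.le_zero, ← not_lt, rStat_dyckOf_pos hc hi, sStat_dyckOf_pos hc hi]
  cases l[i].1 <;> cases l[i].2 <;> simp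

lemma two_le_choose_add_and_eq_two_iff {r s : ℕ} (hr : 0 < r) (hs : 0 < s) :
    2 ≤ (r + s).choose r ∧ ((r + s).choose r = 2 ↔ r = 1 ∧ s = 1) := by
  obtain ⟨r, rfl⟩ := Nat.exists_eq_add_of_le' hr
  obtain ⟨s, rfl⟩ := Nat.exists_eq_add_of_le' hs
  have pascal : (r + 1 + (s + 1)).choose (r + 1) =
      (r + s + 1).choose r + (r + s + 1).choose (r + 1) := by
    rw [← Nat.choose_succ_succ']; congr 1; lia
  have h1 : 0 < (r + s + 1).choose r := Nat.choose_pos (by lia)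
  have h2 : 0 < (r + s + 1).choose (r + 1) := Nat.choose_pos (by lia)
  have h3 : (r + s + 1).choose r = 1 ↔ r = 0 := by rw [Nat.choose_eq_one_iff]; lia
  have h4 : (r + s + 1).choose (r + 1) = 1 ↔ s = 0 := by rw [Nat.choose_eq_one_iff]; lia
  lia

lemma LStat_eq_four_iff {n k₁ k₂ : ℕ} {w : List Bool} (h : twoStars n w k₁ k₂) :
    LStat n w = 4 ↔
      (rStat w k₁ = 1 ∧ sStat w k₁ = 1) ∧ (rStat w k₂ = 1 ∧ sStat w k₂ = 1) := by
  obtain ⟨h1, h2, hlt, ⟨hr1, hs1⟩, ⟨hr2, hs2⟩, huniq⟩ := h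
  have hL : LStat n w = (rStat w k₁ + sStat w k₁).choose (rStat w k₁) *
      (rStat w k₂ + sStat w k₂).choose (rStat w k₂) := by
    rw [← Finset.prod_pair hlt.ne (f := fun i => (rStat w i + sStat w i).choose (rStat w i)), LStat]
    symm
    refine Finset.prod_subset (by simp [Finset.insert_subset_iff, h1, h2]) fun i hi hni => ?_
    have : rStat w i = 0 ∨ sStat w i = 0 := by
      have := huniq i hi
      simp only [Finset.mem_insert, Finset.mem_singleton] at hni
      lia
    rcases this with h | h <;> simp [h]
  obtain ⟨a1, b1⟩ := two_le_choose_add_and_eq_two_iff hr1 hs1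
  obtain ⟨a2, b2⟩ := two_le_choose_add_and_eq_two_iff hr2 hs2
  rw [hL, ← b1, ← b2]
  refine ⟨fun h => ?_, fun ⟨h1, h2⟩ => by rw [h1, h2]⟩
  constructor <;> nlinarith

end StatisticsOfDyckOf

section Occurrences

variable {α : Type*} {a : α} {l l₁ l₁' l₂ l₂' : List α} {i j : ℕ}

lemma getElem?_eq_some_iff_exists_append :
    l[i]? = some a ↔ ∃ l₁ l₂, l = l₁ ++ a :: l₂ ∧ i = l₁.length := by
  refine ⟨fun h => ?_, ?_⟩
  · obtain ⟨hi, rfl⟩ := List.getElem?_eq_some_iff.1 h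
    exact ⟨l.take i, l.drop (i + 1), by simp, by simp [hi.le]⟩
  · rintro ⟨l₁, l₂, rfl, rfl⟩
    simp

lemma two_occurrences_iff :
    (i < j ∧ l[i]? = some a ∧ l[j]? = some a ∧ ∀ k, l[k]? = some a → k = i ∨ k = j) ↔
      ∃ l₁ l₂ l₃, l = l₁ ++ a :: (l₂ ++ a :: l₃) ∧ (a ∉ l₁ ∧ a ∉ l₂ ∧ a ∉ l₃) ∧
        i = l₁.length ∧ j = l₁.length + 1 + l₂.length := by
  constructor
  · rintro ⟨hij, hi, hj, honly⟩
    obtain ⟨l₁, r, rfl, rfl⟩ := getElem?_eq_some_iff_exists_append.1 hi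
    obtain ⟨m, rfl⟩ := Nat.exists_eq_add_of_lt hij
    obtain ⟨l₂, l₃, rfl, rfl⟩ : ∃ l₂ l₃, r = l₂ ++ a :: l₃ ∧ m = l₂.length := by
      rw [← getElem?_eq_some_iff_exists_append, ← hj]
      simp [List.getElem?_append_right, add_assoc]
    simp only [getElem?_eq_some_iff_exists_append] at honly
    refine ⟨l₁, l₂, l₃, rfl, ⟨fun h => ?_, fun h => ?_, fun h => ?_⟩, rfl, by lia⟩
    · obtain ⟨s, t, rfl⟩ := List.append_of_mem h
      have := honly s.length ⟨s, _, List.append_assoc .., rfl⟩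
      simp only [List.length_append, List.length_cons] at this
      lia
    · obtain ⟨s, t, rfl⟩ := List.append_of_mem h
      have := honly (l₁ ++ a :: s).length ⟨_, t ++ a :: l₃, by simp, rfl⟩
      simp only [List.length_append, List.length_cons] at this
      lia
    · obtain ⟨s, t, rfl⟩ := List.append_of_mem h
      have := honly (l₁ ++ a :: (l₂ ++ a :: s)).length ⟨_, t, by simp, rfl⟩
      simp only [List.length_append, List.length_cons] at this
      lia
  · rintro ⟨l₁, l₂, l₃, rfl, h, rfl, rfl⟩
    simp only [List.mem_iff_getElem?] at h
    grind

lemma append_cons_inj_of_notMem_left (h : a ∉ l₁) (h' : a ∉ l₁') :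
    l₁ ++ a :: l₂ = l₁' ++ a :: l₂' ↔ l₁ = l₁' ∧ l₂ = l₂' := by
  induction l₁ generalizing l₁' with
  | nil => cases l₁' <;> simp_all
  | cons b l₁ ih =>
    cases l₁' with
    | nil => simp_all [eq_comm (a := b)]
    | cons b' l₁' => simp_all [and_assoc]

end Occurrences

section Starred

variable {A C α β δ : List (Option Bool)} {z : ℕ}

/-- The letter of a two-coloured Motzkin word given by a letter of a Motzkin word (`some true` = up,
`some false` = down, `none` = horizontal), of the colour `(false, false)` if horizontal. -/
def letterPair (a : Option Bool) : Bool × Bool := (a == some false, a == some true)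

lemma letterPair_injective : Function.Injective letterPair := by decide

lemma mem_range_letterPair {a : Bool × Bool} : a ∈ Set.range letterPair ↔ a ≠ (true, true) := by
  simp only [Set.mem_range]
  revert a
  decide

lemma exists_map_letterPair_iff {l : List (Bool × Bool)} :
    (∃ A : List (Option Bool), A.map letterPair = l) ↔ (true, true) ∉ l := by
  rw [← Set.mem_range, Set.range_list_map]
  simp only [Set.mem_ofPred_eq, mem_range_letterPair]
  exact ⟨fun h hl => h _ hl rfl, fun h a ha e => h (e ▸ ha)⟩

lemma map_fst_map_letterPair (A : List (Option Bool)) :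
    (A.map letterPair).map Prod.fst = A.map (· == some false) := by
  simp [letterPair]

lemma map_snd_map_letterPair (A : List (Option Bool)) :
    (A.map letterPair).map Prod.snd = A.map (· == some true) := by
  simp [letterPair]

lemma countP_fst_map_letterPair (A : List (Option Bool)) :
    (A.map letterPair).countP Prod.fst = A.count (some false) :=
  List.countP_map

lemma countP_snd_map_letterPair (A : List (Option Bool)) :
    (A.map letterPair).countP Prod.snd = A.count (some true) :=
  List.countP_map

lemma count_true_map_beq (A : List (Option Bool)) (a : Option Bool) :
    (A.map (· == a)).count true = A.count a :=
  count_true_map _ _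

/-- The Motzkin word `A` read backwards, with up and down steps exchanged. -/
def flipWord (A : List (Option Bool)) : List (Option Bool) := (A.map (Option.map not)).reverse

lemma flipWord_flipWord (A : List (Option Bool)) : flipWord (flipWord A) = A := by
  simp [flipWord, Function.comp_def]

lemma length_flipWord (A : List (Option Bool)) : (flipWord A).length = A.length := by
  simp [flipWord]

lemma map_beq_flipWord (A : List (Option Bool)) (b : Bool) :
    (flipWord A).map (· == some b) = (A.map (· == some !b)).reverse := by
  simp only [flipWord, List.map_reverse, List.map_map, List.reverse_inj]
  refine List.map_congr_left fun a _ => ?_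
  rcases a with _ | a
  · rfl
  · cases a <;> cases b <;> rfl

/-- The two-coloured Motzkin word with exactly two letters `(true, true)` and with the three
blocks `A`, `β` and the flip of `C` between them; flipping the last block makes the roles of `A`
and `C` symmetric. -/
def starred (A β C : List (Option Bool)) : List (Bool × Bool) :=
  A.map letterPair ++ (true, true) :: (β.map letterPair ++ (true, true) ::
    (flipWord C).map letterPair)

lemma length_starred (A β C : List (Option Bool)) :
    (starred A β C).length = A.length + 1 + β.length + 1 + C.length := by
  simp only [starred, List.length_append, List.length_cons, List.length_map, length_flipWord]
  lia

lemma starred_inj {A' β' C' : List (Option Bool)} :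
    starred A β C = starred A' β' C' ↔ A = A' ∧ β = β' ∧ C = C' := by
  have h (X : List (Option Bool)) : (true, true) ∉ X.map letterPair :=
    exists_map_letterPair_iff.1 ⟨X, rfl⟩
  have hinj := letterPair_injective.list_map
  rw [starred, starred, append_cons_inj_of_notMem_left (h _) (h _),
    append_cons_inj_of_notMem_left (h _) (h _), hinj.eq_iff, hinj.eq_iff, hinj.eq_iff,
    (Function.LeftInverse.injective flipWord_flipWord).eq_iff]

lemma map_fst_starred (A β C : List (Option Bool)) :
    (starred A β C).map Prod.fst = A.map (· == some false) ++ true ::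
      (β.map (· == some false) ++ true :: (C.map (· == some true)).reverse) := by
  simp only [starred, List.map_append, List.map_cons, map_fst_map_letterPair, map_beq_flipWord,
    Bool.not_false]

lemma map_snd_starred (A β C : List (Option Bool)) :
    (starred A β C).map Prod.snd = A.map (· == some true) ++ true ::
      (β.map (· == some true) ++ true :: (C.map (· == some false)).reverse) := by
  simp only [starred, List.map_append, List.map_cons, map_snd_map_letterPair, map_beq_flipWord,
    Bool.not_true]

lemma countP_fst_starred (A β C : List (Option Bool)) :
    (starred A β C).countP Prod.fst =
      A.count (some false) + β.count (some false) + C.count (some true) + 2 := by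
  rw [← count_true_map, map_fst_starred]
  simp only [List.count_append, List.count_cons_self, List.count_reverse, count_true_map_beq]
  lia

lemma countP_snd_starred (A β C : List (Option Bool)) :
    (starred A β C).countP Prod.snd =
      A.count (some true) + β.count (some true) + C.count (some false) + 2 := by
  rw [← count_true_map, map_snd_starred]
  simp only [List.count_append, List.count_cons_self, List.count_reverse, count_true_map_beq]
  lia

lemma take_length_starred (A β C : List (Option Bool)) :
    (starred A β C).take A.length = A.map letterPair := by
  rw [starred, List.take_left' (by simp)]

lemma take_length_add_length_starred (A β C : List (Option Bool)) :
    (starred A β C).take (A.length + 1 + β.length) =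
      A.map letterPair ++ (true, true) :: β.map letterPair := by
  rw [starred, ← List.cons_append, ← List.append_assoc, List.take_left' (by simp; lia)]

lemma getElem_starred_left (h : A.length < (starred A β C).length) :
    (starred A β C)[A.length] = (true, true) := by
  simp [starred]

lemma getElem_starred_right (h : A.length + 1 + β.length < (starred A β C).length) :
    (starred A β C)[A.length + 1 + β.length] = (true, true) := by
  simp [starred, add_assoc, add_comm 1]

lemma star_dyckOf_iff {l : List (Bool × Bool)} (hl : IsTwoMotzkin l) (i : ℕ) :
    (i + 1 ∈ Finset.Icc 1 l.length ∧ 0 < rStat (dyckOf l) (i + 1) ∧ 0 < sStat (dyckOf l) (i + 1)) ↔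
      l[i]? = some (true, true) := by
  rw [List.getElem?_eq_some_iff, Finset.mem_Icc]
  refine ⟨fun ⟨hi, h⟩ => ?_, fun ⟨hi, h⟩ => ?_⟩
  · rw [rStat_dyckOf_pos hl hi.2, sStat_dyckOf_pos hl hi.2] at h
    exact ⟨hi.2, Prod.ext h.1 h.2⟩
  · rw [rStat_dyckOf_pos hl hi, sStat_dyckOf_pos hl hi, h]
    exact ⟨⟨by lia, hi⟩, rfl, rfl⟩

lemma twoStars_dyckOf_iff_getElem? {l : List (Bool × Bool)} (hl : IsTwoMotzkin l) {k₁ k₂ : ℕ} :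
    twoStars (l.length + 1) (dyckOf l) k₁ k₂ ↔ ∃ i j, (i < j ∧
      l[i]? = some (true, true) ∧ l[j]? = some (true, true) ∧
        ∀ k, l[k]? = some (true, true) → k = i ∨ k = j) ∧ k₁ = i + 1 ∧ k₂ = j + 1 := by
  simp only [← star_dyckOf_iff hl, twoStars, Nat.add_sub_cancel]
  constructor
  · rintro ⟨h₁, h₂, hlt, hs₁, hs₂, honly⟩
    obtain ⟨i, rfl⟩ := Nat.exists_eq_add_of_le' (Finset.mem_Icc.1 h₁).1
    obtain ⟨j, rfl⟩ := Nat.exists_eq_add_of_le' (Finset.mem_Icc.1 h₂).1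
    exact ⟨i, j, ⟨by lia, ⟨h₁, hs₁⟩, ⟨h₂, hs₂⟩, fun k hk => by
      simpa using honly _ hk.1 hk.2⟩, rfl, rfl⟩
  · rintro ⟨i, j, ⟨hlt, h₁, h₂, honly⟩, rfl, rfl⟩
    refine ⟨h₁.1, h₂.1, by lia, h₁.2, h₂.2, fun k hk hs => ?_⟩
    obtain ⟨k, rfl⟩ := Nat.exists_eq_add_of_le' (Finset.mem_Icc.1 hk).1
    simpa using honly k ⟨hk, hs⟩

lemma twoStars_dyckOf_iff {l : List (Bool × Bool)} (hl : IsTwoMotzkin l) {k₁ k₂ : ℕ} :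
    twoStars (l.length + 1) (dyckOf l) k₁ k₂ ↔ ∃ A β C, l = starred A β C ∧
      k₁ = A.length + 1 ∧ k₂ = A.length + 1 + β.length + 1 := by
  simp only [twoStars_dyckOf_iff_getElem? hl, two_occurrences_iff, ← exists_map_letterPair_iff]
  constructor
  · rintro ⟨_, _, ⟨_, _, _, rfl, ⟨⟨A, rfl⟩, ⟨β, rfl⟩, ⟨C, rfl⟩⟩, rfl, rfl⟩, rfl, rfl⟩
    exact ⟨A, β, flipWord C, by rw [starred, flipWord_flipWord], by simp, by simp⟩
  · rintro ⟨A, β, C, rfl, rfl, rfl⟩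
    exact ⟨_, _, ⟨_, _, _, rfl, ⟨⟨A, rfl⟩, ⟨β, rfl⟩, ⟨_, rfl⟩⟩, rfl, rfl⟩, by simp, by simp⟩

lemma xStat_starred (h : IsTwoMotzkin (starred A β C)) :
    xStat (dyckOf (starred A β C)) (A.length + 1) = A.count (some true) := by
  rw [xStat_dyckOf h (by rw [length_starred]; lia), take_length_starred, List.countP_map,
    List.count]
  congr 1
  decide

lemma yStat_starred (h : IsTwoMotzkin (starred A β C)) :
    yStat (dyckOf (starred A β C)) (A.length + 1 + β.length + 1) =
      A.count (some false) + β.count (some false) := by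
  rw [yStat_dyckOf h (by rw [length_starred]; lia), take_length_add_length_starred,
    List.countP_append, List.countP_cons, List.countP_map, List.countP_map]
  simp only [List.count, Bool.not_true, Bool.and_false, Bool.false_eq_true, if_false, add_zero]
  congr 2 <;> decide

lemma staysNonneg_map_letterPair {h : ℤ} :
    StaysNonneg Prod.snd Prod.fst h (A.map letterPair) ↔
      StaysNonneg (· == some true) (· == some false) h A :=
  staysNonneg_map

lemma staysNonneg_flipWord {h : ℤ} :
    StaysNonneg (· == some true) (· == some false)
        (h + A.count (some true) - A.count (some false)) (flipWord A) ↔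
      StaysNonneg (· == some true) (· == some false) h A := by
  rw [← staysNonneg_reverse (l := A), flipWord, ← List.map_reverse, staysNonneg_map]
  have hup : (· == some true) ∘ Option.map not = (· == some false) := by decide
  have hdown : (· == some false) ∘ Option.map not = (· == some true) := by decide
  rw [hup, hdown]
  rfl

lemma isTwoMotzkin_starred_iff
    (hA : A.count (some true) = A.count (some false) + β.count (some false) + 1) :
    IsTwoMotzkin (starred A β C) ↔
      StaysNonneg (· == some true) (· == some false) 0 A ∧
      StaysNonneg (· == some true) (· == some false) 0 C ∧
        C.count (some true) = C.count (some false) + β.count (some true) + 1 := by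
  have hbal : (starred A β C).countP Prod.fst = (starred A β C).countP Prod.snd ↔
      C.count (some true) = C.count (some false) + β.count (some true) + 1 := by
    rw [countP_fst_starred, countP_snd_starred]
    lia
  rw [IsTwoMotzkin, hbal, ← and_assoc]
  refine and_congr_left fun hC => ?_
  have hβ : StaysNonneg Prod.snd Prod.fst (A.count (some true) - A.count (some false) : ℤ)
      (β.map letterPair) := by
    refine staysNonneg_map_letterPair.2 (.of_countP_le ?_)
    rw [← List.count_eq_countP]
    lia
  have hheight : (A.count (some true) - A.count (some false) + β.count (some true) -
      β.count (some false) : ℤ) = C.count (some true) - C.count (some false) := by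
    lia
  simp only [starred, staysNonneg_append, staysNonneg_cons, countP_fst_map_letterPair,
    countP_snd_map_letterPair, Bool.toNat_true, Nat.cast_one, add_sub_cancel_right, hβ, zero_add,
    hheight, staysNonneg_map_letterPair]
  rw [← staysNonneg_flipWord (A := C), zero_add]
  refine and_congr_right fun _ => ⟨fun H => H.2.2.2, fun H => ⟨?_, trivial, ?_, H⟩⟩ <;> lia

lemma rStat_starred (h : IsTwoMotzkin (starred A β C))
    (hA : A.count (some true) = A.count (some false) + β.count (some false) + 1) :
    rStat (dyckOf (starred A β C)) (A.length + 1) =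
        falsesAfter (A.map (· == some true)) (A.count (some false)) + 1 ∧
      rStat (dyckOf (starred A β C)) (A.length + 1 + β.length + 1) =
        falsesAfter (A.map (· == some true)) (A.count (some true)) + 1 := by
  have hblock {p : ℕ} (hp : p ≤ A.count (some true)) :
      falsesAfter ((starred A β C).map Prod.snd) p =
        falsesAfter (A.map (· == some true)) p := by
    rw [map_snd_starred, falsesAfter_append_true_of_le (by rwa [count_true_map_beq])]
  rw [rStat_dyckOf h (by rw [length_starred]; lia), rStat_dyckOf h (by rw [length_starred]; lia),
    getElem_starred_left, getElem_starred_right, take_length_starred,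
    take_length_add_length_starred, List.countP_append, List.countP_cons]
  simp only [countP_fst_map_letterPair, if_true, ← add_assoc, ← hA]
  rw [hblock (by lia), hblock le_rfl]
  exact ⟨rfl, rfl⟩

lemma sStat_starred (h : IsTwoMotzkin (starred A β C))
    (hA : A.count (some true) = A.count (some false) + β.count (some false) + 1)
    (hC : C.count (some true) = C.count (some false) + β.count (some true) + 1) :
    sStat (dyckOf (starred A β C)) (A.length + 1) =
        falsesAfter (C.map (· == some true)) (C.count (some true)) + 1 ∧
      sStat (dyckOf (starred A β C)) (A.length + 1 + β.length + 1) =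
        falsesAfter (C.map (· == some true)) (C.count (some false)) + 1 := by
  have hblock {p q : ℕ} (hpq : C.count (some true) = p + q) :
      falsesAfter ((starred A β C).map Prod.fst) (A.count (some true) + 1 + q) =
        falsesAfter (C.map (· == some true)) p := by
    have hindex : A.count (some true) + 1 + q = (A.map (· == some false)).count true + 1 +
        ((β.map (· == some false)).count true + 1 + q) := by
      rw [count_true_map_beq, count_true_map_beq, hA]
      lia
    rw [map_fst_starred, hindex, falsesAfter_append_true_add, falsesAfter_append_true_add]
    exact falsesAfter_reverse (by rw [count_true_map_beq, hpq])
  rw [sStat_dyckOf h (by rw [length_starred]; lia), sStat_dyckOf h (by rw [length_starred]; lia),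
    getElem_starred_left, getElem_starred_right, take_length_starred,
    take_length_add_length_starred, List.countP_append, List.countP_cons]
  simp only [countP_snd_map_letterPair, if_true]
  constructor
  · rw [← hblock (add_zero _).symm, add_zero]
  · rw [← hblock (hC.trans (add_assoc _ _ 1)), add_right_comm]

lemma LStat_starred_eq_four_iff (h : IsTwoMotzkin (starred A β C))
    (hA : A.count (some true) = A.count (some false) + β.count (some false) + 1)
    (hC : C.count (some true) = C.count (some false) + β.count (some true) + 1) :
    LStat ((starred A β C).length + 1) (dyckOf (starred A β C)) = 4 ↔
      (falsesAfter (A.map (· == some true)) (A.count (some false)) = 0 ∧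
        falsesAfter (A.map (· == some true)) (A.count (some true)) = 0) ∧
      (falsesAfter (C.map (· == some true)) (C.count (some false)) = 0 ∧
        falsesAfter (C.map (· == some true)) (C.count (some true)) = 0) := by
  rw [LStat_eq_four_iff ((twoStars_dyckOf_iff h).2 ⟨A, β, C, rfl, rfl, rfl⟩),
    (rStat_starred h hA).1, (rStat_starred h hA).2, (sStat_starred h hA hC).1,
    (sStat_starred h hA hC).2]
  lia

/-- Prefixes of Motzkin paths ending at height `z`. -/
def IsMotzkinPrefix (z : ℕ) (l : List (Option Bool)) : Prop :=
  StaysNonneg (· == some true) (· == some false) 0 l ∧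
    l.count (some true) = l.count (some false) + z

/-- Prefixes of Motzkin paths ending at height `z` in which, for the number `y` of down steps, the
`y`-th up step is immediately followed by another up step (if `y = 0`, this means that the first
step is up), unless the word ends there. -/
def IsTightPrefix (z : ℕ) (l : List (Option Bool)) : Prop :=
  IsMotzkinPrefix z l ∧ falsesAfter (l.map (· == some true)) (l.count (some false)) = 0

lemma count_concat_up (α : List (Option Bool)) :
    (α ++ [some true]).count (some true) = α.count (some true) + 1 ∧
      (α ++ [some true]).count (some false) = α.count (some false) := by
  simp

lemma staysNonneg_concat_up {h : ℤ} :
    StaysNonneg (· == some true) (· == some false) h (α ++ [some true]) ↔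
      StaysNonneg (· == some true) (· == some false) h α := by
  rw [staysNonneg_concat, and_iff_left_iff_imp]
  intro H
  have := H.final_nonneg
  simp only [← List.count_eq_countP, count_concat_up] at this ⊢
  lia

lemma isTightPrefix_concat_up_iff :
    IsTightPrefix z α ↔
      StaysNonneg (· == some true) (· == some false) 0 (α ++ [some true]) ∧
      (α ++ [some true]).count (some true) = (α ++ [some true]).count (some false) + z + 1 ∧
      falsesAfter ((α ++ [some true]).map (· == some true))
        ((α ++ [some true]).count (some false)) = 0 := by
  rw [IsTightPrefix, IsMotzkinPrefix, staysNonneg_concat_up, (count_concat_up α).1,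
    (count_concat_up α).2, Nat.add_right_cancel_iff, and_assoc]
  refine and_congr_right fun _ => and_congr_right fun h => ?_
  rw [List.map_append, List.map_singleton, beq_self_eq_true,
    falsesAfter_append_true_of_le (by rw [count_true_map_beq]; lia)]

lemma exists_isTightPrefix_concat_iff :
    (∃ α, IsTightPrefix z α ∧ α ++ [some true] = A) ↔
      StaysNonneg (· == some true) (· == some false) 0 A ∧
      A.count (some true) = A.count (some false) + z + 1 ∧
      falsesAfter (A.map (· == some true)) (A.count (some false)) = 0 ∧
      falsesAfter (A.map (· == some true)) (A.count (some true)) = 0 := by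
  rw [← count_true_map_beq A (some true), falsesAfter_count_eq_zero_iff, count_true_map_beq]
  constructor
  · rintro ⟨α, hα, rfl⟩
    obtain ⟨h₁, h₂, h₃⟩ := isTightPrefix_concat_up_iff.1 hα
    exact ⟨h₁, h₂, h₃, by simp⟩
  · rintro ⟨h₁, h₂, h₃, hlast⟩
    rcases List.eq_nil_or_concat' A with rfl | ⟨α, a, rfl⟩
    · simp at h₂
    · obtain rfl : a = some true := by simpa using hlast
      exact ⟨α, isTightPrefix_concat_up_iff.2 ⟨h₁, h₂, h₃⟩, rfl⟩

lemma IsTightPrefix.eq_nil (h : IsTightPrefix 0 α) : α = [] := by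
  obtain ⟨⟨hα, hcount⟩, htight⟩ := h
  rw [← add_zero (α.count (some false)), ← hcount, ← count_true_map_beq,
    falsesAfter_count_eq_zero_iff] at htight
  rcases List.eq_nil_or_concat' α with rfl | ⟨α, a, rfl⟩
  · rfl
  · obtain rfl : a = some true := by simpa using htight
    have := (staysNonneg_concat_up.1 hα).final_nonneg
    rw [(count_concat_up α).1, (count_concat_up α).2] at hcount
    simp only [← List.count_eq_countP] at this
    lia

/-- The two-coloured Motzkin words corresponding to the Dyck paths counted by the theorem. -/
def assemble (α β δ : List (Option Bool)) : List (Bool × Bool) :=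
  starred (α ++ [some true]) β (δ ++ [some true])

lemma length_assemble (α β δ : List (Option Bool)) :
    (assemble α β δ).length = α.length + β.length + δ.length + 4 := by
  rw [assemble, length_starred, List.length_append, List.length_append, List.length_singleton]
  lia

lemma assemble_inj {α' β' δ' : List (Option Bool)} :
    assemble α β δ = assemble α' β' δ' ↔ α = α' ∧ β = β' ∧ δ = δ' := by
  simp [assemble, starred_inj]

lemma isTwoMotzkin_assemble (hα : IsTightPrefix (β.count (some false)) α)
    (hδ : IsTightPrefix (β.count (some true)) δ) : IsTwoMotzkin (assemble α β δ) := by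
  obtain ⟨hA, hcountA, -⟩ := exists_isTightPrefix_concat_iff.1 ⟨α, hα, rfl⟩
  obtain ⟨hC, hcountC, -⟩ := exists_isTightPrefix_concat_iff.1 ⟨δ, hδ, rfl⟩
  exact (isTwoMotzkin_starred_iff hcountA).2 ⟨hA, hC, hcountC⟩

lemma mem_dyckHat_dyckOf_iff {l : List (Bool × Bool)} (hl : IsTwoMotzkin l) :
    (LStat (l.length + 1) (dyckOf l) = 4 ∧ ∃ k₁ k₂, twoStars (l.length + 1) (dyckOf l) k₁ k₂ ∧
      xStat (dyckOf l) k₁ = yStat (dyckOf l) k₂ + 1 ∧ 2 ≤ xStat (dyckOf l) k₁) ↔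
    ∃ α β δ, 1 ≤ β.count (some false) ∧ IsTightPrefix (β.count (some false)) α ∧
      IsTightPrefix (β.count (some true)) δ ∧ assemble α β δ = l := by
  simp only [twoStars_dyckOf_iff hl]
  constructor
  · rintro ⟨hL, _, _, ⟨A, β, C, rfl, rfl, rfl⟩, hxy, hx⟩
    rw [xStat_starred hl, yStat_starred hl] at hxy
    rw [xStat_starred hl] at hx
    obtain ⟨hA, hC, hcount⟩ := (isTwoMotzkin_starred_iff hxy).1 hl
    obtain ⟨htA, htC⟩ := (LStat_starred_eq_four_iff hl hxy hcount).1 hL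
    obtain ⟨α, hα, rfl⟩ := exists_isTightPrefix_concat_iff.2 ⟨hA, hxy, htA⟩
    obtain ⟨δ, hδ, rfl⟩ := exists_isTightPrefix_concat_iff.2 ⟨hC, hcount, htC⟩
    refine ⟨α, β, δ, Nat.one_le_iff_ne_zero.2 fun hβ => ?_, hα, hδ, rfl⟩
    rw [hβ] at hα
    simp [hα.eq_nil] at hx
  · rintro ⟨α, β, δ, hβ, hα, hδ, rfl⟩
    obtain ⟨hA, hxy, htA⟩ := exists_isTightPrefix_concat_iff.1 ⟨α, hα, rfl⟩
    obtain ⟨hC, hcount, htC⟩ := exists_isTightPrefix_concat_iff.1 ⟨δ, hδ, rfl⟩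
    rw [assemble] at hl ⊢
    refine ⟨(LStat_starred_eq_four_iff hl hxy hcount).2 ⟨htA, htC⟩, _, _, ⟨_, _, _, rfl, rfl, rfl⟩,
      ?_⟩
    rw [xStat_starred hl, yStat_starred hl]
    exact ⟨hxy, by lia⟩
end Starred

section Words

/-- The words of length `n` on the alphabet of Motzkin words. -/
noncomputable def words (n : ℕ) : Finset (List (Option Bool)) :=
  (List.finite_length_eq (Option Bool) n).toFinset

lemma mem_words {n : ℕ} {w : List (Option Bool)} : w ∈ words n ↔ w.length = n := by
  simp [words]

lemma words_zero : words 0 = {[]} := by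
  ext w
  simp [mem_words]

lemma sum_words_succ {R : Type*} [AddCommMonoid R] (n : ℕ) (f : List (Option Bool) → R) :
    ∑ w ∈ words (n + 1), f w =
      ∑ w ∈ words n, (f (w ++ [none]) + f (w ++ [some true]) + f (w ++ [some false])) := by
  have hconcat : ∑ w ∈ words (n + 1), f w =
      ∑ x ∈ words n ×ˢ (Finset.univ : Finset (Option Bool)), f (x.1 ++ [x.2]) := by
    symm
    refine Finset.sum_nbij (fun x => x.1 ++ [x.2]) ?_ ?_ ?_ (fun _ _ => rfl)
    · intro x hx
      simpa [mem_words] using hx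
    · rintro ⟨w, a⟩ - ⟨w', a'⟩ - h
      simpa using h
    · intro w hw
      rcases List.eq_nil_or_concat' w with rfl | ⟨w, a, rfl⟩
      · simp [mem_words] at hw
      · exact ⟨(w, a), by simpa [mem_words] using hw, rfl⟩
  simp [hconcat, Finset.sum_product, Fintype.sum_option, add_assoc]

lemma sum_words_pow_mul_pow {R : Type*} [CommSemiring R] (x y : R) (n : ℕ) :
    ∑ w ∈ words n, x ^ w.count (some false) * y ^ w.count (some true) = (1 + y + x) ^ n := by
  induction n with
  | zero => simp [words_zero]
  | succ n ih =>
    rw [sum_words_succ, pow_succ, ← ih, Finset.sum_mul]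
    refine Finset.sum_congr rfl fun w _ => ?_
    have hcount (a b : Option Bool) : (w ++ [a]).count b = w.count b + if a = b then 1 else 0 := by
      simp [List.count_singleton]
    simp only [hcount, reduceCtorEq, Option.some.injEq, Bool.false_eq_true, Bool.true_eq_false,
      if_true, if_false]
    ring

end Words

section MotzkinPrefixes

open PowerSeries

lemma isMotzkinPrefix_zero_iff {l : List (Option Bool)} :
    IsMotzkinPrefix 0 l ↔ IsMotzkinWord l := by
  simp [IsMotzkinPrefix, IsMotzkinWord, StaysNonneg, List.count, and_comm, eq_comm]

lemma isMotzkinPrefix_nil_iff {z : ℕ} : IsMotzkinPrefix z [] ↔ z = 0 := by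
  simp [IsMotzkinPrefix, staysNonneg_nil, eq_comm]

lemma isMotzkinPrefix_concat_iff {z : ℕ} {l : List (Option Bool)} {a : Option Bool} :
    IsMotzkinPrefix z (l ++ [a]) ↔ StaysNonneg (· == some true) (· == some false) 0 l ∧
      (l ++ [a]).count (some true) = (l ++ [a]).count (some false) + z := by
  rw [IsMotzkinPrefix, staysNonneg_concat, and_assoc, and_congr_right_iff, and_iff_right_iff_imp]
  simp only [← List.count_eq_countP]
  lia

lemma isMotzkinPrefix_concat_none_iff {z : ℕ} {l : List (Option Bool)} :
    IsMotzkinPrefix z (l ++ [none]) ↔ IsMotzkinPrefix z l := by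
  rw [isMotzkinPrefix_concat_iff, IsMotzkinPrefix]
  simp

lemma isMotzkinPrefix_concat_up_iff {z : ℕ} {l : List (Option Bool)} :
    IsMotzkinPrefix (z + 1) (l ++ [some true]) ↔ IsMotzkinPrefix z l := by
  rw [isMotzkinPrefix_concat_iff, IsMotzkinPrefix]
  simp [← add_assoc]

lemma not_isMotzkinPrefix_zero_concat_up {l : List (Option Bool)} :
    ¬ IsMotzkinPrefix 0 (l ++ [some true]) := by
  rw [isMotzkinPrefix_concat_iff, (count_concat_up l).1, (count_concat_up l).2]
  rintro ⟨H, hcount⟩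
  have := H.final_nonneg
  simp only [← List.count_eq_countP] at this
  lia

lemma isMotzkinPrefix_concat_down_iff {z : ℕ} {l : List (Option Bool)} :
    IsMotzkinPrefix z (l ++ [some false]) ↔ IsMotzkinPrefix (z + 1) l := by
  rw [isMotzkinPrefix_concat_iff, IsMotzkinPrefix]
  simp [add_assoc, add_comm 1 z]

open Classical in
/-- The generating function, by length, of the prefixes of Motzkin paths ending at height `z`. -/
noncomputable def prefixSeries (z : ℕ) : PowerSeries ℚ :=
  mk fun n => ((words n).filter (IsMotzkinPrefix z)).card

lemma prefixSeries_zero_eq_motzkinGF : prefixSeries 0 = motzkinGF := by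
  classical
  ext n
  rw [prefixSeries, motzkinGF, coeff_mk, coeff_mk, motzkin, ← Set.ncard_coe_finset]
  congr 2
  ext w
  simp [mem_words, isMotzkinPrefix_zero_iff]

lemma prefixSeries_zero :
    prefixSeries 0 = 1 + X * (prefixSeries 0 + prefixSeries 1) := by
  classical
  ext n
  cases n with
  | zero => simp [prefixSeries, words_zero, Finset.filter_singleton, isMotzkinPrefix_nil_iff]
  | succ n =>
    simp [-Finset.sum_boole, prefixSeries, coeff_succ_X_mul, coeff_one, Finset.card_filter,
      sum_words_succ, isMotzkinPrefix_concat_none_iff, not_isMotzkinPrefix_zero_concat_up,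
      isMotzkinPrefix_concat_down_iff, Finset.sum_add_distrib]

lemma prefixSeries_succ (z : ℕ) :
    prefixSeries (z + 1) =
      X * (prefixSeries (z + 1) + prefixSeries z + prefixSeries (z + 2)) := by
  classical
  ext n
  cases n with
  | zero => simp [prefixSeries, words_zero, Finset.filter_singleton, isMotzkinPrefix_nil_iff]
  | succ n =>
    simp [-Finset.sum_boole, prefixSeries, coeff_succ_X_mul, Finset.card_filter, sum_words_succ,
      isMotzkinPrefix_concat_none_iff, isMotzkinPrefix_concat_up_iff,
      isMotzkinPrefix_concat_down_iff, Finset.sum_add_distrib]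

lemma eq_zero_of_motzkin_recurrence {R : Type*} [CommSemiring R] {f : ℕ → PowerSeries R}
    (h0 : f 0 = X * (f 0 + f 1)) (hsucc : ∀ z, f (z + 1) = X * (f (z + 1) + f z + f (z + 2)))
    (z : ℕ) : f z = 0 := by
  ext n
  induction n generalizing z with
  | zero => cases z with
    | zero => rw [h0]; simp
    | succ z => rw [hsucc]; simp
  | succ n ih => cases z with
    | zero => rw [h0, coeff_succ_X_mul, map_add, ih, ih]; simp
    | succ z => rw [hsucc, coeff_succ_X_mul, map_add, map_add, ih, ih, ih]; simp

lemma prefixSeries_succ_eq_mul (z : ℕ) :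
    prefixSeries (z + 1) = X * motzkinGF * prefixSeries z := by
  rw [← sub_eq_zero]
  refine eq_zero_of_motzkin_recurrence
    (f := fun z => prefixSeries (z + 1) - X * motzkinGF * prefixSeries z) ?_ (fun z => ?_) z
  · have h0 := prefixSeries_zero
    rw [prefixSeries_zero_eq_motzkinGF] at h0
    simp only [prefixSeries_zero_eq_motzkinGF, zero_add]
    linear_combination prefixSeries_succ 0 - X * motzkinGF * h0
      + X * prefixSeries_zero_eq_motzkinGF
  · linear_combination prefixSeries_succ (z + 1) - X * motzkinGF * prefixSeries_succ z

/-- The generating function of the Motzkin paths multiplied by `X`. -/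
noncomputable def shiftedMotzkinGF : PowerSeries ℚ := X * motzkinGF

lemma prefixSeries_eq (z : ℕ) : prefixSeries z = motzkinGF * shiftedMotzkinGF ^ z := by
  induction z with
  | zero => rw [prefixSeries_zero_eq_motzkinGF, pow_zero, mul_one]
  | succ z ih =>
    rw [prefixSeries_succ_eq_mul, ih, shiftedMotzkinGF]
    ring

lemma motzkinGF_eq : motzkinGF = 1 + shiftedMotzkinGF + shiftedMotzkinGF ^ 2 := by
  have h := prefixSeries_zero
  rw [prefixSeries_eq, prefixSeries_eq] at h
  rw [shiftedMotzkinGF] at *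
  linear_combination h

end MotzkinPrefixes

section InsertUp

/-- The word obtained by inserting an up step right after the `y`-th up step of a word (at its end
if it has at most `y` up steps). -/
def insertUp : ℕ → List (Option Bool) → List (Option Bool)
  | 0, l => some true :: l
  | _ + 1, [] => [some true]
  | y + 1, a :: l => a :: insertUp (if a = some true then y else y + 1) l

lemma insertUp_perm (y : ℕ) (l : List (Option Bool)) : (insertUp y l).Perm (some true :: l) := by
  induction l generalizing y with
  | nil => cases y <;> rfl
  | cons a l ih =>
    cases y with
    | zero => rfl
    | succ y => exact ((ih _).cons a).trans (.swap ..)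

lemma insertUp_injective (y : ℕ) : Function.Injective (insertUp y) := by
  intro l l' h
  induction l generalizing y l' with
  | nil => exact (List.length_eq_zero_iff.1 (by
      simpa [(insertUp_perm y _).length_eq] using (congrArg List.length h).symm)).symm
  | cons a l ih =>
    cases y with
    | zero => simpa [insertUp] using h
    | succ y =>
      rcases l' with _ | ⟨a', l'⟩
      · simpa [(insertUp_perm _ _).length_eq] using congrArg List.length h
      · rw [insertUp, insertUp, List.cons.injEq] at h
        obtain ⟨rfl, h⟩ := h
        rw [ih _ h]

lemma falsesAfter_insertUp {y : ℕ} {l : List (Option Bool)} (h : y ≤ l.count (some true)) :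
    falsesAfter ((insertUp y l).map (· == some true)) y = 0 := by
  induction l generalizing y with
  | nil => simp_all [insertUp, falsesAfter]
  | cons a l ih =>
    cases y with
    | zero => rfl
    | succ y =>
      rcases a with _ | _ | _
      all_goals
        refine ih ?_
        simpa using h

lemma exists_insertUp_eq {y : ℕ} {l : List (Option Bool)} (hy : y < l.count (some true))
    (h : falsesAfter (l.map (· == some true)) y = 0) : ∃ l', insertUp y l' = l := by
  induction l generalizing y with
  | nil => simp at hy
  | cons a l ih =>
    cases y with
    | zero =>
      obtain rfl : a = some true := by
        rcases a with _ | _ | _ <;> simp_all [falsesAfter]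
      exact ⟨l, by rw [insertUp]⟩
    | succ y =>
      obtain ⟨l', hl'⟩ := ih (y := if a = some true then y else y + 1)
        (by rcases a with _ | _ | _ <;> simpa using hy)
        (by rcases a with _ | _ | _ <;> simpa [falsesAfter] using h)
      exact ⟨a :: l', by rw [insertUp, hl']⟩

-- Past the inserted step both paths have enough height left to stay nonnegative.
lemma staysNonneg_insertUp_iff {h : ℤ} {y : ℕ} {l : List (Option Bool)}
    (hdown : l.count (some false) ≤ h + y) (hup : y ≤ l.count (some true)) :
    StaysNonneg (· == some true) (· == some false) h (insertUp y l) ↔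
      StaysNonneg (· == some true) (· == some false) h l := by
  induction l generalizing h y with
  | nil =>
    obtain rfl : y = 0 := by simpa using hup
    simp_all [insertUp, staysNonneg_cons, staysNonneg_nil, Int.add_nonneg]
  | cons a l ih =>
    cases y with
    | zero =>
      refine iff_of_true (.of_countP_le ?_) (.of_countP_le ?_)
      · simpa [insertUp, List.count] using hdown
      · simpa [List.count] using hdown
    | succ y =>
      rw [insertUp, staysNonneg_cons, staysNonneg_cons, ih]
      · rcases a with _ | _ | _ <;> simp at hdown ⊢ <;> lia
      · rcases a with _ | _ | _ <;> simpa using hup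

lemma count_up_insertUp (y : ℕ) (l : List (Option Bool)) :
    (insertUp y l).count (some true) = l.count (some true) + 1 := by
  simp [(insertUp_perm y l).count_eq]

lemma count_down_insertUp (y : ℕ) (l : List (Option Bool)) :
    (insertUp y l).count (some false) = l.count (some false) := by
  simp [(insertUp_perm y l).count_eq]

lemma length_insertUp (y : ℕ) (l : List (Option Bool)) : (insertUp y l).length = l.length + 1 :=
  (insertUp_perm y l).length_eq

lemma isTightPrefix_insertUp_iff {z : ℕ} {l : List (Option Bool)} :
    IsTightPrefix (z + 1) (insertUp (l.count (some false)) l) ↔ IsMotzkinPrefix z l := by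
  rw [IsTightPrefix, IsMotzkinPrefix, IsMotzkinPrefix, count_up_insertUp, count_down_insertUp,
    ← add_assoc, Nat.add_right_cancel_iff]
  constructor
  · rintro ⟨⟨H, hcount⟩, -⟩
    exact ⟨(staysNonneg_insertUp_iff (by simp) (by lia)).1 H, hcount⟩
  · rintro ⟨H, hcount⟩
    exact ⟨⟨(staysNonneg_insertUp_iff (by simp) (by lia)).2 H, hcount⟩,
      falsesAfter_insertUp (by lia)⟩

lemma IsTightPrefix.exists_eq_insertUp {z : ℕ} {l : List (Option Bool)}
    (h : IsTightPrefix (z + 1) l) :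
    ∃ l', IsMotzkinPrefix z l' ∧ insertUp (l'.count (some false)) l' = l := by
  obtain ⟨l', hl'⟩ := exists_insertUp_eq (by have := h.1.2; lia) h.2
  have hdown : l.count (some false) = l'.count (some false) := by
    rw [← hl', count_down_insertUp]
  rw [hdown] at hl'
  exact ⟨l', isTightPrefix_insertUp_iff.1 (by rwa [hl']), hl'⟩

end InsertUp

section TightPrefixes

open PowerSeries

open Classical in
/-- The finite set of tight prefixes of length `n` ending at height `z`. -/
noncomputable def tightPrefixes (z n : ℕ) : Finset (List (Option Bool)) :=
  (words n).filter (IsTightPrefix z)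

lemma mem_tightPrefixes {z n : ℕ} {l : List (Option Bool)} :
    l ∈ tightPrefixes z n ↔ l.length = n ∧ IsTightPrefix z l := by
  simp [tightPrefixes, mem_words]

lemma card_tightPrefixes_succ_succ (z n : ℕ) :
    ((tightPrefixes (z + 1) (n + 1)).card : ℚ) = coeff n (prefixSeries z) := by
  classical
  rw [prefixSeries, coeff_mk, Nat.cast_inj]
  symm
  refine Finset.card_nbij (fun l => insertUp (l.count (some false)) l) ?_ ?_ ?_
  · intro l hl
    rw [Finset.mem_coe, Finset.mem_filter, mem_words] at hl
    rw [Finset.mem_coe, mem_tightPrefixes, isTightPrefix_insertUp_iff, length_insertUp, hl.1]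
    exact ⟨rfl, hl.2⟩
  · intro l _ l' _ h
    have hdown := congrArg (List.count (some false)) h
    simp only [count_down_insertUp] at hdown
    simp only [hdown] at h
    exact insertUp_injective _ h
  · intro l hl
    rw [Finset.mem_coe, mem_tightPrefixes] at hl
    obtain ⟨l', hl', rfl⟩ := hl.2.exists_eq_insertUp
    rw [length_insertUp, Nat.add_right_cancel_iff] at hl
    refine ⟨l', ?_, rfl⟩
    rw [Finset.mem_coe, Finset.mem_filter, mem_words]
    exact ⟨hl.1, hl'⟩

lemma isTightPrefix_nil_iff {z : ℕ} : IsTightPrefix z [] ↔ z = 0 := by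
  simp [IsTightPrefix, isMotzkinPrefix_nil_iff, falsesAfter]

lemma card_tightPrefixes (z n : ℕ) :
    ((tightPrefixes z n).card : ℚ) = coeff n (shiftedMotzkinGF ^ z) := by
  cases n with
  | zero =>
    have hzero : constantCoeff shiftedMotzkinGF = 0 := by simp [shiftedMotzkinGF]
    by_cases hz : z = 0 <;>
      simp [tightPrefixes, words_zero, Finset.filter_singleton, isTightPrefix_nil_iff, hz, hzero]
  | succ n =>
    cases z with
    | zero =>
      have hempty : tightPrefixes 0 (n + 1) = ∅ := by
        refine Finset.eq_empty_of_forall_notMem fun l hl => ?_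
        rw [mem_tightPrefixes] at hl
        simp [hl.2.eq_nil] at hl
      simp [hempty, coeff_one]
    | succ z =>
      rw [pow_succ', shiftedMotzkinGF, mul_assoc, ← shiftedMotzkinGF, ← prefixSeries_eq,
        coeff_succ_X_mul, card_tightPrefixes_succ_succ]

end TightPrefixes

section TightTriples

open PowerSeries
open Finset.HasAntidiagonal (antidiagonal mem_antidiagonal)

lemma coeff_mul_of_one_sub_X_mul_mul_eq_one {R : Type*} [CommRing R] {A F : PowerSeries R}
    (h : (1 - X * A) * F = 1) (B : PowerSeries R) (N : ℕ) :
    coeff N (B * F) = ∑ p ∈ antidiagonal N, coeff p.2 (B * A ^ p.1) := by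
  have hF : B * F = B + X * (B * A * F) := by linear_combination B * h
  induction N generalizing B with
  | zero => simp [hF]
  | succ N ih =>
    rw [hF, map_add, coeff_succ_X_mul, ih _ (by linear_combination B * A * h),
      Finset.Nat.sum_antidiagonal_succ]
    simp [pow_succ', mul_assoc]

lemma sum_words_filter_pow_mul_pow {R : Type*} [CommRing R] (x y : R) (n : ℕ) :
    ∑ w ∈ words n with 1 ≤ w.count (some false),
        x ^ w.count (some false) * y ^ w.count (some true) = (1 + y + x) ^ n - (1 + y) ^ n := by
  have hzero := sum_words_pow_mul_pow 0 y n
  rw [add_zero] at hzero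
  rw [← hzero, ← sum_words_pow_mul_pow x y n, ← Finset.sum_sub_distrib, Finset.sum_filter]
  refine Finset.sum_congr rfl fun w _ => ?_
  split_ifs with hw
  · rw [zero_pow (by lia), zero_mul, sub_zero]
  · rw [show w.count (some false) = 0 by lia, pow_zero, pow_zero, sub_self]

lemma derivative_shiftedMotzkinGF_mul :
    derivative ℚ shiftedMotzkinGF * (1 - X - 2 * X * shiftedMotzkinGF) = motzkinGF := by
  have hS : shiftedMotzkinGF = X * (1 + shiftedMotzkinGF + shiftedMotzkinGF ^ 2) := by
    rw [← motzkinGF_eq, shiftedMotzkinGF]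
  have hD := congrArg (derivative ℚ) hS
  rw [Derivation.leibniz, map_add, map_add, derivative_X, sq, Derivation.leibniz] at hD
  simp only [smul_eq_mul, Derivation.map_one_eq_zero] at hD
  linear_combination hD - motzkinGF_eq

lemma one_sub_X_mul_mul_motzkinGF : (1 - X * (1 + shiftedMotzkinGF)) * motzkinGF = 1 := by
  have hS : shiftedMotzkinGF = X * motzkinGF := rfl
  linear_combination motzkinGF_eq + (1 + shiftedMotzkinGF) * hS

lemma one_sub_X_mul_mul_motzkinGF_add :
    (1 - X * (1 + shiftedMotzkinGF + shiftedMotzkinGF)) *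
      (motzkinGF + X ^ 2 * (derivative ℚ shiftedMotzkinGF * motzkinGF)) = 1 := by
  have hS : shiftedMotzkinGF = X * motzkinGF := rfl
  linear_combination one_sub_X_mul_mul_motzkinGF +
    X ^ 2 * motzkinGF * derivative_shiftedMotzkinGF_mul - X * motzkinGF * hS

lemma sum_coeff_pow_sub_pow (N : ℕ) :
    ∑ p ∈ antidiagonal (N + 2), coeff p.2
        ((1 + shiftedMotzkinGF + shiftedMotzkinGF) ^ p.1 - (1 + shiftedMotzkinGF) ^ p.1) =
      coeff N (derivative ℚ shiftedMotzkinGF * motzkinGF) := by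
  have h₁ := coeff_mul_of_one_sub_X_mul_mul_eq_one one_sub_X_mul_mul_motzkinGF 1 (N + 2)
  have h₂ := coeff_mul_of_one_sub_X_mul_mul_eq_one one_sub_X_mul_mul_motzkinGF_add 1 (N + 2)
  simp only [one_mul] at h₁ h₂
  rw [map_add, coeff_X_pow_mul, h₁] at h₂
  simp only [map_sub, Finset.sum_sub_distrib, ← h₂, add_sub_cancel_left]

lemma coeff_derivative_shiftedMotzkinGF_mul (N : ℕ) :
    coeff N (derivative ℚ shiftedMotzkinGF * motzkinGF) =
      (∑ i ∈ Finset.range (N + 1), (i + 1) * motzkin i * motzkin (N - i) : ℕ) := by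
  rw [coeff_mul, Finset.Nat.sum_antidiagonal_eq_sum_range_succ_mk]
  push_cast
  refine Finset.sum_congr rfl fun i _ => ?_
  rw [coeff_derivative, shiftedMotzkinGF, coeff_succ_X_mul, motzkinGF, coeff_mk, coeff_mk]
  ring

/-- The triples of words from which the Dyck paths counted by the theorem are assembled. -/
def tightTriples (N : ℕ) :
    Set (List (Option Bool) × List (Option Bool) × List (Option Bool)) :=
  {(α, β, δ) | α.length + β.length + δ.length = N ∧ 1 ≤ β.count (some false) ∧
    IsTightPrefix (β.count (some false)) α ∧ IsTightPrefix (β.count (some true)) δ}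

lemma mem_tightTriples {N : ℕ} {α β δ : List (Option Bool)} :
    (α, β, δ) ∈ tightTriples N ↔ α.length + β.length + δ.length = N ∧ 1 ≤ β.count (some false) ∧
      IsTightPrefix (β.count (some false)) α ∧ IsTightPrefix (β.count (some true)) δ :=
  Iff.rfl

lemma ncard_tightTriples (N : ℕ) :
    (tightTriples N).ncard = ∑ p ∈ antidiagonal N,
      ∑ β ∈ words p.1 with 1 ≤ β.count (some false), ∑ q ∈ antidiagonal p.2,
        (tightPrefixes (β.count (some false)) q.1).card *
          (tightPrefixes (β.count (some true)) q.2).card := by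
  simp only [← Finset.card_product, ← Finset.card_sigma]
  rw [← Set.ncard_coe_finset]
  refine Set.ncard_congr (fun t _ => ⟨(t.2.1.length, t.1.length + t.2.2.length), t.2.1,
    (t.1.length, t.2.2.length), (t.1, t.2.2)⟩) ?_ ?_ ?_
  · rintro ⟨α, β, δ⟩ ⟨h, hβ, hα, hδ⟩
    simp only [Finset.mem_coe, Finset.mem_sigma, Finset.mem_filter, Finset.mem_product,
      mem_antidiagonal, mem_words, mem_tightPrefixes, true_and]
    exact ⟨by lia, hβ, hα, hδ⟩
  · intro t t' _ _ h
    exact congrArg (fun x => (x.2.2.2.1, x.2.1, x.2.2.2.2)) h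
  · rintro ⟨⟨l, m⟩, β, ⟨i, j⟩, α, δ⟩ h
    simp only [Finset.mem_coe, Finset.mem_sigma, Finset.mem_filter, Finset.mem_product,
      mem_antidiagonal, mem_words, mem_tightPrefixes] at h
    obtain ⟨hN, ⟨rfl, hβ⟩, rfl, ⟨rfl, hα⟩, rfl, hδ⟩ := h
    exact ⟨(α, β, δ), mem_tightTriples.2 ⟨by lia, hβ, hα, hδ⟩, rfl⟩

lemma ncard_tightTriples_add_two (N : ℕ) :
    (tightTriples (N + 2)).ncard =
      ∑ i ∈ Finset.range (N + 1), (i + 1) * motzkin i * motzkin (N - i) := by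
  rw [← Nat.cast_inj (R := ℚ), ← coeff_derivative_shiftedMotzkinGF_mul,
    ← sum_coeff_pow_sub_pow, ncard_tightTriples]
  push_cast
  simp only [card_tightPrefixes, ← coeff_mul, ← map_sum, sum_words_filter_pow_mul_pow]

end TightTriples

lemma dyckHat_eq_image (N : ℕ) :
    {w | IsDyckWord (N + 5) w ∧ LStat (N + 5) w = 4 ∧ ∃ k₁ k₂, twoStars (N + 5) w k₁ k₂ ∧
        xStat w k₁ = yStat w k₂ + 1 ∧ 2 ≤ xStat w k₁} =
      (fun t => dyckOf (assemble t.1 t.2.1 t.2.2)) '' tightTriples N := by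
  ext w
  constructor
  · rintro ⟨hw, hD⟩
    obtain ⟨l, hlength, hl, rfl⟩ := hw.exists_dyckOf
    rw [show N + 5 = l.length + 1 by lia, mem_dyckHat_dyckOf_iff hl] at hD
    obtain ⟨α, β, δ, hβ, hα, hδ, rfl⟩ := hD
    rw [length_assemble, Nat.add_right_cancel_iff] at hlength
    exact ⟨(α, β, δ), ⟨hlength, hβ, hα, hδ⟩, rfl⟩
  · rintro ⟨⟨α, β, δ⟩, ⟨hlength, hβ, hα, hδ⟩, rfl⟩
    have hl := isTwoMotzkin_assemble hα hδ
    have hN : (assemble α β δ).length = N + 4 := by rw [length_assemble, hlength]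
    have hD := (mem_dyckHat_dyckOf_iff hl).2 ⟨α, β, δ, hβ, hα, hδ, rfl⟩
    rw [hN] at hD
    exact ⟨(isDyckWord_dyckOf_iff hl.2).2 ⟨hN, hl⟩, hD⟩

lemma injOn_dyckOf_assemble (N : ℕ) :
    Set.InjOn (fun t => dyckOf (assemble t.1 t.2.1 t.2.2)) (tightTriples N) := by
  rintro ⟨α, β, δ⟩ ⟨-, -, hα, hδ⟩ ⟨α', β', δ'⟩ ⟨-, -, hα', hδ'⟩ h
  obtain ⟨rfl, rfl, rfl⟩ := assemble_inj.1
    (injOn_dyckOf (isTwoMotzkin_assemble hα hδ) (isTwoMotzkin_assemble hα' hδ') h)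
  rfl

/-- **Lemma.** For `n ≥ 7`, the number of Dyck paths `D ∈ 𝒟̂ₙ` with
`x₁(D) = y₂(D) + 1 ≥ 2` is `Σ_{i=0}^{n-7} (i+1)·Mᵢ·M_{n-7-i}`. -/
theorem dyckHat_x1_eq_y2_succ_count (n : ℕ) (hn : 7 ≤ n) :
    {w | IsDyckWord n w ∧ LStat n w = 4 ∧ ∃ k₁ k₂, twoStars n w k₁ k₂ ∧
        xStat w k₁ = yStat w k₂ + 1 ∧ 2 ≤ xStat w k₁}.ncard =
      ∑ i ∈ Finset.range (n - 7 + 1), (i + 1) * motzkin i * motzkin (n - 7 - i) := by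
  obtain ⟨N, rfl⟩ := Nat.exists_eq_add_of_le' hn
  rw [dyckHat_eq_image (N + 2), (injOn_dyckOf_assemble _).ncard_image,
    ncard_tightTriples_add_two, Nat.add_sub_cancel]
end

section
/- Let D ∈ D_n and suppose D has a return after 2k steps for some 1 ≤ k < n. Then r_k(D) > 0 and s_k(D) > 0, and consequently binom(r_k(D)+s_k(D), r_k(D)) > 1. In particular, every D ∈ D_n^{r,s} (for r, s ≥ 1) has at most two returns. -/
/-!
A Dyck path that touches the axis after `2k` steps, with `1 ≤ k < n`, has just made a down step and
is about to make an up step. By then it has made exactly `k` steps of each kind, so that down step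
lies between the `k`-th and the `(k+1)`-st `u`, and that up step lies between the `k`-th and the
`(k+1)`-st `d`; hence `r_k` and `s_k` are positive. Every return other than the last one is thus
an index at which both statistics are positive, and a path in `𝒟ₙ^{r,s}` has only one such index.
-/

theorem countP_take_add_one_of_neg {α : Type*} {p : α → Bool} {w : List α} {m : ℕ}
    (hm : m < w.length) (hp : p w[m] = false) :
    (w.take (m + 1)).countP p = (w.take m).countP p := by
  rw [List.take_succ_eq_append_getElem hm, List.countP_append, List.countP_singleton, hp]
  rfl

theorem getD_findIdxs_lt_iff {α : Type*} {p : α → Bool} {w : List α} {i : ℕ}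
    (hi : i < w.countP p) (m : ℕ) :
    (w.findIdxs p).getD i 0 < m ↔ i < (w.take m).countP p := by
  have hlen : i < (w.findIdxs p).length := by rwa [List.length_findIdxs]
  rw [List.getD_eq_getElem _ _ hlen, List.getElem_findIdxs_eq_findIdxNth]
  have hbefore : (w.take (w.findIdxNth p i)).countP p = i := by
    rw [← List.countPBefore_eq_countP_take, List.countPBefore_findIdxNth_of_lt_countP hi]
  have hthrough : (w.take (w.findIdxNth p i + 1)).countP p = i + 1 := by
    rw [List.take_succ_eq_append_getElem (List.findIdxNth_lt_length_of_lt_countP hi),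
      List.countP_append, List.countP_singleton, hbefore, if_pos List.pos_findIdxNth_getElem]
  constructor
  · intro hlt
    calc i < (w.take (w.findIdxNth p i + 1)).countP p := by rw [hthrough]; exact Nat.lt_add_one i
      _ ≤ (w.take m).countP p := (List.take_sublist_take_left hlt).countP_le
  · contrapose!
    intro hle
    exact ((List.take_sublist_take_left hle).countP_le).trans_eq hbefore

theorem count_between_findIdxs_pos {α : Type*} [BEq α] [LawfulBEq α] {p : α → Bool} {w : List α}
    {m k : ℕ} (hm : m < w.length) (hp : p w[m] = false) (hk : 1 ≤ k)
    (hcount : (w.take m).countP p = k) (hkw : k < w.countP p) :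
    0 < ((w.take ((w.findIdxs p).getD k 0)).drop
      ((w.findIdxs p).getD (k - 1) 0 + 1)).count w[m] := by
  have hprev : (w.findIdxs p).getD (k - 1) 0 < m :=
    (getD_findIdxs_lt_iff (by omega) m).2 (by omega)
  have hnext : m < (w.findIdxs p).getD k 0 := by
    by_contra! hle
    have hlt := (getD_findIdxs_lt_iff hkw (m + 1)).1 (Nat.lt_succ_of_le hle)
    rw [countP_take_add_one_of_neg hm hp, hcount] at hlt
    exact lt_irrefl k hlt
  rw [List.count_pos_iff, List.mem_drop_iff_getElem]
  refine ⟨m - ((w.findIdxs p).getD (k - 1) 0 + 1), ?_, ?_⟩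
  · rw [List.length_take]
    omega
  · simp only [List.getElem_take, Nat.add_sub_cancel' hprev]

section PrefixDominated

variable {α : Type*} [BEq α] [LawfulBEq α] {a b : α} {w : List α} {m : ℕ}

theorem getElem_ne_of_count_take_add_one_eq (hab : a ≠ b)
    (hw : ∀ p : List α, p <+: w → p.count a ≤ p.count b) (hm : m < w.length)
    (h : (w.take (m + 1)).count a = (w.take (m + 1)).count b) : w[m] ≠ b := by
  intro hb
  have hprefix := hw _ (w.take_prefix m)
  rw [List.take_succ_eq_append_getElem hm, List.count_append, List.count_append, hb,
    List.count_singleton_self, List.count_singleton, beq_false_of_ne hab.symm] at h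
  exact absurd (h.symm.trans_le hprefix) (Nat.not_succ_le_self _)

theorem getElem_ne_of_count_take_eq (hab : a ≠ b)
    (hw : ∀ p : List α, p <+: w → p.count a ≤ p.count b) (hm : m < w.length)
    (h : (w.take m).count a = (w.take m).count b) : w[m] ≠ a := by
  intro ha
  have hprefix := hw _ (w.take_prefix (m + 1))
  rw [List.take_succ_eq_append_getElem hm, List.count_append, List.count_append, ha,
    List.count_singleton_self, List.count_singleton, beq_false_of_ne hab, h] at hprefix
  exact absurd hprefix (Nat.not_succ_le_self _)

end PrefixDominated

/-- The indices `1 ≤ i ≤ n - 1` at which both `rᵢ` and `sᵢ` are positive, that is, those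
whose factor in the product `LStat n w` exceeds `1`. -/
def jointPosIdxs (n : ℕ) (w : List Bool) : Finset ℕ :=
  {i ∈ Finset.Icc 1 (n - 1) | 0 < rStat w i ∧ 0 < sStat w i}

theorem card_jointPosIdxs_of_mem_dyckRS {n r s : ℕ} {w : List Bool} (hw : w ∈ dyckRS n r s) :
    (jointPosIdxs n w).card = 1 := by
  obtain ⟨-, i, hi, hpos, -, -, hunique⟩ := hw
  rw [Finset.card_eq_one]
  refine ⟨i, Finset.eq_singleton_iff_unique_mem.2 ⟨Finset.mem_filter.2 ⟨hi, hpos⟩, ?_⟩⟩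
  intro j hj
  obtain ⟨hj, hjpos⟩ := Finset.mem_filter.1 hj
  exact hunique j hj hjpos

theorem one_lt_add_choose {r s : ℕ} (hr : 0 < r) (hs : 0 < s) : 1 < (r + s).choose r := by
  have hpos : 0 < (r + s).choose r := Nat.choose_pos (Nat.le_add_right r s)
  have hne : (r + s).choose r ≠ 1 := by
    rw [Ne, Nat.choose_eq_one_iff]
    omega
  omega

namespace IsDyckWord

variable {n k : ℕ} {w : List Bool}

theorem count_take_of_mem_returns (hw : IsDyckWord n w) (hk : k ∈ returns n w) (c : Bool) :
    (w.take (2 * k)).count c = k := by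
  obtain ⟨hkmem, hbalanced⟩ := Finset.mem_filter.1 hk
  have hkn := (Finset.mem_Icc.1 hkmem).2
  have hsum := List.count_true_add_count_false (w.take (2 * k))
  rw [List.length_take, hw.1] at hsum
  cases c <;> omega

theorem rStat_pos_of_mem_returns (hw : IsDyckWord n w) (hk : k ∈ returns n w) (hkn : k < n) :
    0 < rStat w k := by
  have hk1 : 1 ≤ k := (Finset.mem_Icc.1 (Finset.mem_filter.1 hk).1).1
  have hm : 2 * k - 1 < w.length := by rw [hw.1]; omega
  have hsucc : 2 * k - 1 + 1 = 2 * k := by omega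
  have hdown : w[2 * k - 1] = false :=
    Bool.eq_false_of_not_eq_true <|
      getElem_ne_of_count_take_add_one_eq Bool.false_ne_true hw.2.2.2 hm
        (by rw [hsucc]; exact (Finset.mem_filter.1 hk).2)
  have hneg : (w[2 * k - 1] == true) = false := by rw [hdown]; rfl
  have hcount : (w.take (2 * k - 1)).countP (· == true) = k := by
    rw [← countP_take_add_one_of_neg hm hneg, hsucc]
    exact hw.count_take_of_mem_returns hk true
  have hpos := count_between_findIdxs_pos hm hneg hk1 hcount (hkn.trans_eq hw.2.1.symm)
  rwa [hdown] at hpos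

theorem sStat_pos_of_mem_returns (hw : IsDyckWord n w) (hk : k ∈ returns n w) (hkn : k < n) :
    0 < sStat w k := by
  have hk1 : 1 ≤ k := (Finset.mem_Icc.1 (Finset.mem_filter.1 hk).1).1
  have hm : 2 * k < w.length := by rw [hw.1]; omega
  have hup : w[2 * k] = true :=
    Bool.eq_true_of_not_eq_false <|
      getElem_ne_of_count_take_eq Bool.false_ne_true hw.2.2.2 hm (Finset.mem_filter.1 hk).2
  have hpos := count_between_findIdxs_pos (p := (· == false)) hm (by rw [hup]; rfl) hk1
    (hw.count_take_of_mem_returns hk false) (hkn.trans_eq hw.2.2.1.symm)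
  rwa [hup] at hpos

theorem returns_subset_insert (hw : IsDyckWord n w) :
    returns n w ⊆ insert n (jointPosIdxs n w) := by
  intro k hk
  obtain ⟨hk1, hkn⟩ := Finset.mem_Icc.1 (Finset.mem_filter.1 hk).1
  rcases hkn.eq_or_lt with rfl | hlt
  · exact Finset.mem_insert_self k _
  · exact Finset.mem_insert_of_mem <| Finset.mem_filter.2
      ⟨Finset.mem_Icc.2 ⟨hk1, Nat.le_sub_one_of_lt hlt⟩,
        hw.rStat_pos_of_mem_returns hk hlt, hw.sStat_pos_of_mem_returns hk hlt⟩

theorem card_returns_le (hw : IsDyckWord n w) :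
    (returns n w).card ≤ (jointPosIdxs n w).card + 1 :=
  (Finset.card_le_card hw.returns_subset_insert).trans (Finset.card_insert_le _ _)

end IsDyckWord

/-- **Lemma.** If `D ∈ 𝒟ₙ` has a return after `2k` steps with `1 ≤ k < n`, then
`r_k(D) > 0`, `s_k(D) > 0`, and `C(r_k + s_k, r_k) > 1`; in particular every
`D ∈ 𝒟ₙ^{r,s}` (with `r, s ≥ 1`) has at most two returns. -/
theorem dyck_return_rs_pos (n : ℕ) (w : List Bool) (hw : IsDyckWord n w) :
    (∀ k : ℕ, 1 ≤ k → k < n →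
      (w.take (2 * k)).count false = (w.take (2 * k)).count true →
      0 < rStat w k ∧ 0 < sStat w k ∧
        1 < Nat.choose (rStat w k + sStat w k) (rStat w k)) ∧
    (∀ r s : ℕ, 1 ≤ r → 1 ≤ s → w ∈ dyckRS n r s → (returns n w).card ≤ 2) := by
  refine ⟨fun k hk hkn h => ?_, fun r s _ _ hrs => ?_⟩
  · have hret : k ∈ returns n w :=
      Finset.mem_filter.2 ⟨Finset.mem_Icc.2 ⟨hk, hkn.le⟩, h⟩
    have hr := hw.rStat_pos_of_mem_returns hret hkn
    have hs := hw.sStat_pos_of_mem_returns hret hkn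
    exact ⟨hr, hs, one_lt_add_choose hr hs⟩
  · calc (returns n w).card ≤ (jointPosIdxs n w).card + 1 := hw.card_returns_le
      _ = 2 := by rw [card_jointPosIdxs_of_mem_dyckRS hrs]
end
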